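/- Let K > 0 and J ∈ ℝ, and assume φ_{K,J} attains its minimum over [−1,1] at a unique point m* ∈ (−1,1) with φ_{K,J}''(m*) > 0. Then there exist constants c > 0 and C > 0 (depending on K and J) such that for all n ≥ 1 and all x with 0 ≤ x ≤ c·n^{1/6}: | P_{n,K,J}(W_n > x) / P(Z > x) − 1 | ≤ C·(1 + x³)/√n, where Z is a standard normal random variable. -/

import Mathlib

open MeasureTheory ProbabilityTheory Real Filter

noncomputable section

/-- The spin value `±1` associated with a Boolean. -/
def spin (b : Bool) : ℝ := if b then 1 else -1

/-- Total magnetization `S_n(x) = ∑ i, x_i`. -/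
def totalMag (n : ℕ) (x : Fin n → Bool) : ℝ := ∑ i, spin (x i)

/-- Magnetization per particle `m_n(x) = S_n(x)/n`. -/
def magPP (n : ℕ) (x : Fin n → Bool) : ℝ := totalMag n x / n

/-- Boltzmann–Gibbs weight of a configuration in the cubic Curie–Weiss model
(the reference factor `2^{-n}` is constant and cancels upon normalization). -/
def cubicWeight (n : ℕ) (K J : ℝ) (x : Fin n → Bool) : ℝ :=
  Real.exp (n * (K / 3 * (magPP n x) ^ 3 + J / 2 * (magPP n x) ^ 2))

/-- The cubic Curie–Weiss Boltzmann–Gibbs probability measure `P_{n,K,J}`. -/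
def cubicMeasure (n : ℕ) (K J : ℝ) : Measure (Fin n → Bool) :=
  (∑ x : Fin n → Bool, ENNReal.ofReal (cubicWeight n K J x))⁻¹ •
    ∑ x : Fin n → Bool, ENNReal.ofReal (cubicWeight n K J x) • Measure.dirac x

/-- The probability of an event under `P_{n,K,J}`, as a real number. -/
def cubicProb (n : ℕ) (K J : ℝ) (s : Set (Fin n → Bool)) : ℝ :=
  (cubicMeasure n K J s).toReal

/-- The binary relative entropy `I(m)`. -/
def binEnt (m : ℝ) : ℝ :=
  (1 - m) / 2 * Real.log ((1 - m) / 2) + (1 + m) / 2 * Real.log ((1 + m) / 2)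

/-- The function `φ_{K,J}(x) = I(x) − (K/3)x³ − (J/2)x²`. -/
def phiKJ (K J : ℝ) (x : ℝ) : ℝ := binEnt x - K / 3 * x ^ 3 - J / 2 * x ^ 2

/-- The standard normal cumulative distribution function. -/
def stdNormalCDF (z : ℝ) : ℝ :=
  (ProbabilityTheory.gaussianReal 0 1 (Set.Iic z)).toReal

end

/-!
The event `W_n > x` depends only on the number `k` of plus spins, so its probability is a ratio of
sums of level weights `C(n, k) exp (n g(m))`, where `m = 2k/n - 1` and `g` is the interaction; its
cubic form plays no special role. The corresponding values `u` of `W_n` form a grid of step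
`h = 2 √v / √n`, `v = φ''(m*)`.

Near `m*`, Stirling's formula and the third-order Taylor expansion of `φ` show that, up to a common
factor, the weight is `h` times the standard normal density at `u` times `exp (O((1 + |u|³) h))`.
This holds on a window `|u| ≤ δ / h`, that is, up to a macroscopic distance in `m`. Outside it, the
Chernoff bound `C(n, k) ≤ exp (-n I(m))` and the gap of `φ` above its unique minimum make the
weights exponentially small in `n`.

The core is a comparison of Riemann sums with relative precision. For small `δ` the factor
`exp (O(u³ h))` consumes at most half of the Gaussian decay from `x` to `u`, so that the error in
the cell at `u` is, up to a constant, at most `(1 + x³) h` times the density at `x` times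
`h exp (-r (1 + x) (u - x))` for a fixed rate `r`. These errors add up to `(1 + x³) h / (1 + x)`
times the density at `x`, which by the Mills ratio is of order `(1 + x³) h P(Z > x)`. Applied at
`x`, and at `0` to both halves of the grid, this gives the numerator and the normalization. For the
remaining finitely many `n`, both `x` and the ratio are bounded.
-/

/-! ### The standard normal tail -/

/-- The standard normal upper tail `P(Z > x)`. -/
noncomputable def stdNormalTail (x : ℝ) : ℝ := (gaussianReal 0 1).real (Set.Ioi x)

/-- The standard normal density. -/
local notation "γ" => gaussianPDFReal 0 1

lemma stdNormalDensity_eq (u : ℝ) : γ u = (√(2 * π))⁻¹ * exp (-u ^ 2 / 2) := by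
  simp [gaussianPDFReal]

lemma stdNormalDensity_pos (u : ℝ) : 0 < γ u := gaussianPDFReal_pos 0 1 u one_ne_zero

lemma stdNormalDensity_neg (u : ℝ) : γ (-u) = γ u := by simp [stdNormalDensity_eq]

lemma continuous_stdNormalDensity : Continuous γ :=
  (by fun_prop : Continuous fun u : ℝ => (√(2 * π))⁻¹ * exp (-u ^ 2 / 2)).congr
    fun u => (stdNormalDensity_eq u).symm

lemma stdNormalDensity_antitoneOn : AntitoneOn γ (Set.Ici 0) := fun u hu v _ huv => by
  have : u ^ 2 ≤ v ^ 2 := pow_le_pow_left₀ hu huv 2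
  rw [stdNormalDensity_eq, stdNormalDensity_eq]
  gcongr

lemma stdNormalDensity_add (u h : ℝ) : γ (u + h) = γ u * exp (-(h * u + h ^ 2 / 2)) := by
  rw [stdNormalDensity_eq, stdNormalDensity_eq, mul_assoc, ← exp_add]
  congr 2
  ring

lemma stdNormalTail_nonneg (x : ℝ) : 0 ≤ stdNormalTail x := measureReal_nonneg

lemma stdNormalTail_antitone : Antitone stdNormalTail := fun _ _ h =>
  measureReal_mono (Set.Ioi_subset_Ioi h)

lemma stdNormalTail_sub {u v : ℝ} (huv : u ≤ v) :
    stdNormalTail u - stdNormalTail v = ∫ s in u..v, γ s := by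
  have hdiff := measureReal_sdiff (μ := gaussianReal 0 1) (Set.Ioi_subset_Ioi huv) measurableSet_Ioi
  rw [Set.Ioi_sdiff_Ioi] at hdiff
  rw [stdNormalTail, stdNormalTail, ← hdiff, measureReal_def,
    gaussianReal_apply_eq_integral _ one_ne_zero, intervalIntegral.integral_of_le huv,
    ENNReal.toReal_ofReal]
  exact setIntegral_nonneg measurableSet_Ioc fun s _ => gaussianPDFReal_nonneg _ _ _

lemma stdNormalTail_sub_le {u v : ℝ} (hu : 0 ≤ u) (huv : u ≤ v) :
    stdNormalTail u - stdNormalTail v ≤ (v - u) * γ u := by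
  rw [stdNormalTail_sub huv, ← smul_eq_mul, ← intervalIntegral.integral_const]
  exact intervalIntegral.integral_mono_on huv
    (continuous_stdNormalDensity.intervalIntegrable _ _) intervalIntegrable_const
    fun s hs => stdNormalDensity_antitoneOn hu (hu.trans hs.1) hs.1

lemma le_stdNormalTail_sub {u v : ℝ} (hu : 0 ≤ u) (huv : u ≤ v) :
    (v - u) * γ v ≤ stdNormalTail u - stdNormalTail v := by
  rw [stdNormalTail_sub huv, ← smul_eq_mul, ← intervalIntegral.integral_const]
  exact intervalIntegral.integral_mono_on huv intervalIntegrable_const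
    (continuous_stdNormalDensity.intervalIntegrable _ _)
    fun s hs => stdNormalDensity_antitoneOn (hu.trans hs.1) (hu.trans huv) hs.2

/-- A Mills-ratio lower bound: the mass of `(x, x + t]`, `t = 1 / (1 + x)`, is already of the right
order, since the density varies by a bounded factor there. -/
lemma stdNormalDensity_le_mul_tail {x : ℝ} (hx : 0 ≤ x) :
    γ x ≤ exp 2 * ((1 + x) * stdNormalTail x) := by
  set t := (1 + x)⁻¹
  have ht0 : 0 < t := by positivity
  have ht1 : t ≤ 1 := inv_le_one_of_one_le₀ (by linarith)
  have htx : (1 + x) * t = 1 := mul_inv_cancel₀ (by positivity)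
  have hdensity : γ x * exp (-2) ≤ γ (x + t) := by
    rw [stdNormalDensity_add]
    gcongr
    · exact (stdNormalDensity_pos x).le
    · nlinarith
  have hmass : t * γ (x + t) ≤ stdNormalTail x := by
    have := le_stdNormalTail_sub hx (le_add_of_nonneg_right ht0.le : x ≤ x + t)
    linarith [stdNormalTail_nonneg (x + t), add_sub_cancel_left x t]
  calc γ x = exp 2 * ((1 + x) * (t * (γ x * exp (-2)))) := by
        rw [← mul_assoc (1 + x), htx, exp_neg]
        field_simp
    _ ≤ exp 2 * ((1 + x) * stdNormalTail x) := by
        gcongr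
        exact (mul_le_mul_of_nonneg_left hdensity ht0.le).trans hmass

lemma stdNormalTail_pos {x : ℝ} (hx : 0 ≤ x) : 0 < stdNormalTail x := by
  refine (stdNormalTail_nonneg x).lt_of_ne' fun h0 => ?_
  have := stdNormalDensity_le_mul_tail hx
  rw [h0, mul_zero, mul_zero] at this
  exact this.not_gt (stdNormalDensity_pos x)

lemma stdNormalTail_le_exp {x : ℝ} (hx : 0 ≤ x) : stdNormalTail x ≤ exp (-x ^ 2 / 2) := by
  have hchernoff := measure_ge_le_exp_mul_mgf (μ := gaussianReal 0 1) (X := id) x hx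
    (integrable_exp_mul_gaussianReal x)
  rw [mgf_id_gaussianReal, ← exp_add] at hchernoff
  refine (measureReal_mono fun y (hy : x < y) => hy.le).trans (hchernoff.trans_eq ?_)
  congr 1
  push_cast
  ring

lemma stdNormalTail_zero : stdNormalTail 0 = 1 / 2 := by
  have hneg : (gaussianReal 0 1).real (Set.Iio 0) = stdNormalTail 0 := by
    have hmap := gaussianReal_map_neg (μ := 0) (v := 1)
    rw [neg_zero] at hmap
    conv_lhs => rw [← hmap, map_measureReal_apply measurable_neg measurableSet_Iio]
    simp [stdNormalTail]
  have : NullSingletonClass (gaussianReal 0 1) := nullSingletonClass_gaussianReal one_ne_zero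
  have hcompl := measureReal_add_measureReal_compl (μ := gaussianReal 0 1)
    (measurableSet_Ioi (a := (0 : ℝ)))
  rw [Set.compl_Ioi, measureReal_congr Iio_ae_eq_Iic.symm, hneg, probReal_univ] at hcompl
  change stdNormalTail 0 + stdNormalTail 0 = 1 at hcompl
  linarith

/-! ### Elementary inequalities -/

lemma le_one_add_cube {x : ℝ} (hx : 0 ≤ x) : x ≤ 1 + x ^ 3 := by
  nlinarith [mul_nonneg hx (sq_nonneg (x - 1)), sq_nonneg (x - 1)]

lemma mul_le_of_cube_mul_le_one {x h δ : ℝ} (hh : 0 ≤ h) (hh1 : h ≤ 1) (hδ : 0 ≤ δ)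
    (hhδ : h ≤ δ ^ 3) (hxh : x ^ 3 * h ≤ 1) : x * h ≤ δ := by
  refine le_of_pow_le_pow_left₀ three_ne_zero hδ ?_
  calc (x * h) ^ 3 = x ^ 3 * h * (h * h) := by ring
    _ ≤ 1 * (1 * δ ^ 3) := by gcongr
    _ = δ ^ 3 := by ring

lemma abs_exp_sub_one_le_mul_exp_abs (y : ℝ) : |exp y - 1| ≤ |y| * exp |y| := by
  have := Complex.norm_exp_sub_sum_le_norm_mul_exp (y : ℂ) 1
  rw [Finset.sum_range_one, pow_zero, Nat.factorial_zero, Nat.cast_one, div_one, pow_one,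
    ← Complex.ofReal_exp, ← Complex.ofReal_one, ← Complex.ofReal_sub] at this
  simpa only [Complex.norm_real, norm_eq_abs] using this

lemma sum_exp_neg_mul_le {t : ℝ} (ht : 0 < t) (ht1 : t ≤ 1) (N : ℕ) :
    ∑ j ∈ Finset.range N, exp (-(j * t)) ≤ 2 / t := by
  have hratio : exp (-t) < 1 := exp_lt_one_iff.2 (neg_neg_of_pos ht)
  have hgap : t / 2 ≤ 1 - exp (-t) := by
    have hinv : exp t * exp (-t) = 1 := by rw [← exp_add, add_neg_cancel, exp_zero]
    nlinarith [add_one_le_exp t, exp_pos (-t)]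
  calc ∑ j ∈ Finset.range N, exp (-(j * t)) = ∑ j ∈ Finset.range N, exp (-t) ^ j :=
        Finset.sum_congr rfl fun j _ => by rw [← exp_nat_mul, mul_neg]
    _ ≤ 1 / (1 - exp (-t)) := by
        rw [Finset.range_eq_Ico]
        simpa only [pow_zero] using geom_sum_Ico_le_of_lt_one (m := 0) (exp_pos (-t)).le hratio
    _ ≤ 1 / (t / 2) := by gcongr
    _ = 2 / t := one_div_div t 2

lemma one_add_add_cube_le {x y : ℝ} (hx : 0 ≤ x) (hy : 0 ≤ y) :
    1 + (x + y) ^ 3 ≤ 4 * (1 + x ^ 3) * (1 + y ^ 3) := by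
  have : 0 ≤ (x + y) * (x - y) ^ 2 := by positivity
  have : 0 ≤ x ^ 3 * y ^ 3 := by positivity
  have : 0 ≤ x ^ 3 := by positivity
  nlinarith

lemma one_add_cube_le_exp (y : ℝ) : 1 + y ^ 3 ≤ 128 * exp (y ^ 2 / 8) := by
  have := quadratic_le_exp_of_nonneg (x := y ^ 2 / 8) (by positivity)
  nlinarith [sq_nonneg (y ^ 2 - y), sq_nonneg y, sq_nonneg (y ^ 2)]

/-- The polynomial growth of `1 + v ^ 3` is absorbed by half of the Gaussian decay from `x` to `v`,
which leaves an exponential of rate proportional to `1 + x`. -/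
lemma one_add_cube_mul_exp_le {x v : ℝ} (hx : 0 ≤ x) (hxv : x ≤ v) :
    (1 + v ^ 3) * exp (-((v ^ 2 - x ^ 2) / 4)) ≤
      2048 * (1 + x ^ 3) * exp (-((1 + x) * (v - x) / 2)) := by
  obtain ⟨y, hy, rfl⟩ : ∃ y, 0 ≤ y ∧ v = x + y := ⟨v - x, sub_nonneg.2 hxv, by ring⟩
  rw [add_sub_cancel_left]
  have hexp : exp (y ^ 2 / 8) * exp (-(((x + y) ^ 2 - x ^ 2) / 4)) ≤
      4 * exp (-((1 + x) * y / 2)) := by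
    have hexp_one : exp 1 ≤ 4 := by linarith [exp_one_lt_d9]
    calc exp (y ^ 2 / 8) * exp (-(((x + y) ^ 2 - x ^ 2) / 4))
        ≤ exp 1 * exp (-((1 + x) * y / 2)) := by
          rw [← exp_add, ← exp_add, exp_le_exp]
          nlinarith [sq_nonneg (y - 2)]
      _ ≤ 4 * exp (-((1 + x) * y / 2)) := by gcongr
  calc (1 + (x + y) ^ 3) * exp (-(((x + y) ^ 2 - x ^ 2) / 4))
      ≤ 4 * (1 + x ^ 3) * (128 * exp (y ^ 2 / 8)) * exp (-(((x + y) ^ 2 - x ^ 2) / 4)) := by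
        gcongr
        exact (one_add_add_cube_le hx hy).trans
          (mul_le_mul_of_nonneg_left (one_add_cube_le_exp y) (by positivity))
    _ = 512 * (1 + x ^ 3) * (exp (y ^ 2 / 8) * exp (-(((x + y) ^ 2 - x ^ 2) / 4))) := by ring
    _ ≤ 512 * (1 + x ^ 3) * (4 * exp (-((1 + x) * y / 2))) := by gcongr
    _ = 2048 * (1 + x ^ 3) * exp (-((1 + x) * y / 2)) := by ring

lemma stdNormalDensity_le_cube_mul_tail {x : ℝ} (hx : 0 ≤ x) :
    γ x ≤ 2 * exp 2 * (1 + x ^ 3) * stdNormalTail x := by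
  refine (stdNormalDensity_le_mul_tail hx).trans ?_
  have h1 : 1 + x ≤ 2 * (1 + x ^ 3) := by
    linarith [le_one_add_cube hx, pow_nonneg hx 3]
  calc exp 2 * ((1 + x) * stdNormalTail x)
      ≤ exp 2 * (2 * (1 + x ^ 3) * stdNormalTail x) := by
        gcongr
        exact stdNormalTail_nonneg x
    _ = 2 * exp 2 * (1 + x ^ 3) * stdNormalTail x := by ring

/-- For `x ^ 3 * h ≤ 1` the tail at `x` is at least `exp (-O(h ^ (-2 / 3)))`, which dominates
`exp (-η / h ^ 2)`. -/
lemma exists_exp_neg_div_sq_le {η : ℝ} (hη : 0 < η) :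
    ∃ C h₀ : ℝ, 0 < C ∧ 0 < h₀ ∧ ∀ h x : ℝ, 0 < h → h ≤ h₀ → 0 ≤ x → x ^ 3 * h ≤ 1 →
      exp (-(η / h ^ 2)) ≤ C * (1 + x ^ 3) * h * stdNormalTail x := by
  refine ⟨2 / η * √(2 * π) * (2 * exp 2), min 1 (√η ^ 3), by positivity, by positivity, ?_⟩
  intro h x hh hh₀ hx hxh
  have hh1 : h ≤ 1 := hh₀.trans (min_le_left _ _)
  have hsq : x ^ 2 / 2 ≤ η / h ^ 2 / 2 := by
    have hxη := mul_le_of_cube_mul_le_one hh.le hh1 (sqrt_nonneg η)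
      (hh₀.trans (min_le_right _ _)) hxh
    gcongr
    rw [le_div_iff₀ (by positivity), ← mul_pow, ← sq_sqrt hη.le]
    gcongr
  have hdecay : exp (-(η / h ^ 2 / 2)) ≤ 2 / η * h := by
    calc exp (-(η / h ^ 2 / 2)) ≤ (η / h ^ 2 / 2)⁻¹ := by
          rw [exp_neg]
          exact inv_anti₀ (by positivity) (by linarith [add_one_le_exp (η / h ^ 2 / 2)])
      _ = 2 / η * (h * h) := by field_simp
      _ ≤ 2 / η * (h * 1) := by gcongr
      _ = 2 / η * h := by rw [mul_one]
  calc exp (-(η / h ^ 2)) ≤ exp (-(η / h ^ 2 / 2)) * exp (-x ^ 2 / 2) := by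
        rw [← exp_add, exp_le_exp]
        linarith
    _ = exp (-(η / h ^ 2 / 2)) * (√(2 * π) * γ x) := by
        rw [stdNormalDensity_eq, mul_inv_cancel_left₀ (by positivity)]
    _ ≤ 2 / η * h * (√(2 * π) * (2 * exp 2 * (1 + x ^ 3) * stdNormalTail x)) := by
        gcongr
        · exact mul_nonneg (sqrt_nonneg _) (stdNormalDensity_pos x).le
        · exact stdNormalDensity_le_cube_mul_tail hx
    _ = 2 / η * √(2 * π) * (2 * exp 2) * (1 + x ^ 3) * h * stdNormalTail x := by ring

/-! ### Cell-by-cell comparison with the normal law -/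

/-- The weight `b` agrees with `h` times the standard normal density at `u`, the mass of a cell of
width `h`, up to a factor `exp (O((1 + |u| ^ 3) * h))` with implied constant `D`. -/
def IsNearGaussian (D h u b : ℝ) : Prop :=
  ∃ y, |y| ≤ D * (1 + |u| ^ 3) * h ∧ b = h * γ u * exp y

lemma IsNearGaussian.neg {D h u b : ℝ} (hb : IsNearGaussian D h u b) :
    IsNearGaussian D h (-u) b := by
  rwa [IsNearGaussian, abs_neg, stdNormalDensity_neg]

lemma abs_density_sub_stdNormalTail_sub_le {h v : ℝ} (hh : 0 ≤ h) (hh1 : h ≤ 1) (hv : 0 ≤ v) :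
    |h * γ v - (stdNormalTail v - stdNormalTail (v + h))| ≤ h * γ v * (2 * (1 + v ^ 3) * h) := by
  have hγ := stdNormalDensity_pos v
  have hupper := stdNormalTail_sub_le hv (le_add_of_nonneg_right hh)
  have hlower := le_stdNormalTail_sub hv (le_add_of_nonneg_right hh)
  rw [add_sub_cancel_left] at hupper hlower
  have hexponent : h * v + h ^ 2 / 2 ≤ 2 * (1 + v ^ 3) * h := by
    nlinarith [mul_le_mul_of_nonneg_left (le_one_add_cube hv) hh,
      mul_le_mul_of_nonneg_left hh1 hh, mul_nonneg hh (pow_nonneg hv 3)]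
  have hdecay : 1 - 2 * (1 + v ^ 3) * h ≤ exp (-(h * v + h ^ 2 / 2)) := by
    linarith [add_one_le_exp (-(h * v + h ^ 2 / 2))]
  rw [stdNormalDensity_add, ← mul_assoc] at hlower
  have := mul_le_mul_of_nonneg_left hdecay (by positivity : 0 ≤ h * γ v)
  rw [abs_le]
  have : 0 ≤ h * γ v * (2 * (1 + v ^ 3) * h) := by positivity
  constructor <;> linarith

lemma IsNearGaussian.abs_sub_stdNormalTail_sub_le {D h v b : ℝ} (hD : 0 ≤ D) (hh : 0 ≤ h)
    (hh1 : h ≤ 1) (hv : 0 ≤ v) (hb : IsNearGaussian D h v b) :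
    |b - (stdNormalTail v - stdNormalTail (v + h))| ≤
      (D + 2) * h ^ 2 * (1 + v ^ 3) * (γ v * exp (D * (1 + v ^ 3) * h)) := by
  obtain ⟨y, hy, rfl⟩ := hb
  rw [abs_of_nonneg hv] at hy
  have hγ := stdNormalDensity_pos v
  set Y := D * (1 + v ^ 3) * h with hY
  have hY0 : 0 ≤ Y := by positivity
  have hfactor : |h * γ v * exp y - h * γ v| ≤ h * γ v * (Y * exp Y) := by
    rw [← mul_sub_one, abs_mul, abs_of_nonneg (by positivity)]
    gcongr
    exact (abs_exp_sub_one_le_mul_exp_abs y).trans (by gcongr)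
  have hcell := abs_density_sub_stdNormalTail_sub_le hh hh1 hv
  calc |h * γ v * exp y - (stdNormalTail v - stdNormalTail (v + h))|
      ≤ h * γ v * (Y * exp Y) + h * γ v * (2 * (1 + v ^ 3) * h) :=
        (abs_sub_le _ _ _).trans (add_le_add hfactor hcell)
    _ ≤ h * γ v * (Y * exp Y) + h * γ v * (2 * (1 + v ^ 3) * h * exp Y) := by
        gcongr h * γ v * (Y * exp Y) + h * γ v * ?_
        exact le_mul_of_one_le_right (by positivity) (one_le_exp hY0)
    _ = (D + 2) * h ^ 2 * (1 + v ^ 3) * (γ v * exp Y) := by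
        rw [hY]
        ring

/-- Within the window `v * h ≤ δ` a cubic error consumes at most half of the Gaussian decay from
`x` to `v`, because the increment of `v ^ 3 * h` is at most `3 / 2 * δ` times that of `v ^ 2`. -/
lemma cubic_error_le {D δ h x v : ℝ} (hD : 0 ≤ D) (hDδ : D * δ ≤ 1 / 6) (hh : 0 ≤ h)
    (hh1 : h ≤ 1) (hx : 0 ≤ x) (hxh : x ^ 3 * h ≤ 1) (hxv : x ≤ v) (hvδ : v * h ≤ δ) :
    D * (1 + v ^ 3) * h ≤ 2 * D + (v ^ 2 - x ^ 2) / 4 := by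
  have hv : 0 ≤ v := hx.trans hxv
  have hsq : 0 ≤ v ^ 2 - x ^ 2 := sub_nonneg.2 (pow_le_pow_left₀ hx hxv 2)
  have hcube : v ^ 3 - x ^ 3 ≤ 3 / 2 * v * (v ^ 2 - x ^ 2) := by
    have : 0 ≤ (v - x) ^ 2 * (v + 2 * x) := by positivity
    linarith
  have hincrement : D * ((v ^ 3 - x ^ 3) * h) ≤ (v ^ 2 - x ^ 2) / 4 := by
    calc D * ((v ^ 3 - x ^ 3) * h) ≤ D * (3 / 2 * v * (v ^ 2 - x ^ 2) * h) := by gcongr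
      _ = D * (v * h) * (3 / 2 * (v ^ 2 - x ^ 2)) := by ring
      _ ≤ D * δ * (3 / 2 * (v ^ 2 - x ^ 2)) := by gcongr
      _ ≤ 1 / 6 * (3 / 2 * (v ^ 2 - x ^ 2)) := by gcongr
      _ = (v ^ 2 - x ^ 2) / 4 := by ring
  linarith [mul_le_mul_of_nonneg_left hh1 hD, mul_le_mul_of_nonneg_left hxh hD]

lemma IsNearGaussian.abs_sub_stdNormalTail_sub_le_exp {D δ h x v b : ℝ} (hD : 0 ≤ D)
    (hDδ : D * δ ≤ 1 / 6) (hh : 0 ≤ h) (hh1 : h ≤ 1) (hx : 0 ≤ x) (hxh : x ^ 3 * h ≤ 1)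
    (hxv : x ≤ v) (hvδ : v * h ≤ δ) (hb : IsNearGaussian D h v b) :
    |b - (stdNormalTail v - stdNormalTail (v + h))| ≤
      2048 * (D + 2) * exp (2 * D) * (1 + x ^ 3) * h * γ x *
        (h * exp (-((1 + x) * (v - x) / 2))) := by
  have hv : 0 ≤ v := hx.trans hxv
  have hγx := stdNormalDensity_pos x
  have hdensity : γ v * exp (D * (1 + v ^ 3) * h) ≤
      γ x * exp (2 * D) * exp (-((v ^ 2 - x ^ 2) / 4)) := by
    simp only [stdNormalDensity_eq, mul_assoc, ← exp_add]
    refine mul_le_mul_of_nonneg_left (exp_le_exp.2 ?_) (by positivity)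
    linarith [cubic_error_le hD hDδ hh hh1 hx hxh hxv hvδ]
  calc |b - (stdNormalTail v - stdNormalTail (v + h))|
      ≤ (D + 2) * h ^ 2 * (1 + v ^ 3) * (γ v * exp (D * (1 + v ^ 3) * h)) :=
        hb.abs_sub_stdNormalTail_sub_le hD hh hh1 hv
    _ ≤ (D + 2) * h ^ 2 * (1 + v ^ 3) *
          (γ x * exp (2 * D) * exp (-((v ^ 2 - x ^ 2) / 4))) := by gcongr
    _ = (D + 2) * h ^ 2 * γ x * exp (2 * D) *
          ((1 + v ^ 3) * exp (-((v ^ 2 - x ^ 2) / 4))) := by ring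
    _ ≤ (D + 2) * h ^ 2 * γ x * exp (2 * D) *
          (2048 * (1 + x ^ 3) * exp (-((1 + x) * (v - x) / 2))) :=
        mul_le_mul_of_nonneg_left (one_add_cube_mul_exp_le hx hxv) (by positivity)
    _ = 2048 * (D + 2) * exp (2 * D) * (1 + x ^ 3) * h * γ x *
          (h * exp (-((1 + x) * (v - x) / 2))) := by ring

/-- The Riemann sum of the exponential is of the order `1 / (1 + x)` of its integral, which the
Mills ratio turns into the tail at `x`. -/
lemma density_mul_sum_exp_le {x h : ℝ} (hx : 0 ≤ x) (hh : 0 < h) (hh1 : h ≤ 1)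
    (hxh : x ^ 3 * h ≤ 1) (N : ℕ) :
    γ x * ∑ j ∈ Finset.range N, h * exp (-((1 + x) * (j * h) / 2)) ≤
      4 * exp 2 * stdNormalTail x := by
  have hxh1 : x * h ≤ 1 :=
    mul_le_of_cube_mul_le_one hh.le hh1 zero_le_one (by rwa [one_pow]) hxh
  have hsum : ∑ j ∈ Finset.range N, h * exp (-((1 + x) * (j * h) / 2)) ≤ 4 / (1 + x) := by
    calc ∑ j ∈ Finset.range N, h * exp (-((1 + x) * (j * h) / 2))
        = h * ∑ j ∈ Finset.range N, exp (-(j * ((1 + x) * h / 2))) := by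
          rw [Finset.mul_sum]
          exact Finset.sum_congr rfl fun j _ => by ring_nf
      _ ≤ h * (2 / ((1 + x) * h / 2)) := by
          gcongr
          exact sum_exp_neg_mul_le (by positivity) (by linarith) N
      _ = 4 / (1 + x) := by
          field_simp
          norm_num
  calc γ x * ∑ j ∈ Finset.range N, h * exp (-((1 + x) * (j * h) / 2))
      ≤ exp 2 * ((1 + x) * stdNormalTail x) * (4 / (1 + x)) :=
        mul_le_mul (stdNormalDensity_le_mul_tail hx) hsum
          (Finset.sum_nonneg fun j _ => by positivity)
          ((stdNormalDensity_pos x).le.trans (stdNormalDensity_le_mul_tail hx))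
    _ = 4 * exp 2 * stdNormalTail x := by field_simp

lemma abs_sum_nearGaussian_sub_le {D δ h x v₀ : ℝ} {N : ℕ} {b : ℕ → ℝ} (hD : 0 ≤ D)
    (hDδ : D * δ ≤ 1 / 6) (hh : 0 < h) (hh1 : h ≤ 1) (hx : 0 ≤ x) (hxh : x ^ 3 * h ≤ 1)
    (hxv₀ : x ≤ v₀) (hwindow : ∀ j < N, (v₀ + j * h) * h ≤ δ)
    (hb : ∀ j < N, IsNearGaussian D h (v₀ + j * h) (b j)) :
    |∑ j ∈ Finset.range N, b j - (stdNormalTail v₀ - stdNormalTail (v₀ + N * h))| ≤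
      8192 * (D + 2) * exp (2 * D + 2) * (1 + x ^ 3) * h * stdNormalTail x := by
  set B := 2048 * (D + 2) * exp (2 * D) * (1 + x ^ 3) * h with hB
  have hcell : ∀ j ∈ Finset.range N,
      |b j - (stdNormalTail (v₀ + j * h) - stdNormalTail (v₀ + (j + 1 : ℕ) * h))| ≤
        B * γ x * (h * exp (-((1 + x) * (j * h) / 2))) := by
    intro j hj
    have hjh : 0 ≤ j * h := by positivity
    have hnext : v₀ + (j + 1 : ℕ) * h = v₀ + j * h + h := by push_cast; ring
    have := stdNormalDensity_pos x
    rw [hnext]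
    refine ((hb j (Finset.mem_range.1 hj)).abs_sub_stdNormalTail_sub_le_exp hD hDδ hh.le hh1 hx hxh
      (by linarith) (hwindow j (Finset.mem_range.1 hj))).trans ?_
    gcongr
    linarith
  have htelescope := Finset.sum_range_sub' (fun j : ℕ => stdNormalTail (v₀ + j * h)) N
  simp only [Nat.cast_zero, zero_mul, add_zero] at htelescope
  rw [← htelescope, ← Finset.sum_sub_distrib]
  calc _ ≤ ∑ j ∈ Finset.range N, B * γ x * (h * exp (-((1 + x) * (j * h) / 2))) :=
        (Finset.abs_sum_le_sum_abs _ _).trans (Finset.sum_le_sum hcell)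
    _ = B * (γ x * ∑ j ∈ Finset.range N, h * exp (-((1 + x) * (j * h) / 2))) := by
        rw [← Finset.mul_sum, mul_assoc]
    _ ≤ B * (4 * exp 2 * stdNormalTail x) :=
        mul_le_mul_of_nonneg_left (density_mul_sum_exp_le hx hh hh1 hxh N) (by positivity)
    _ = _ := by
        rw [hB, exp_add]
        ring

/-! ### Nearly Gaussian grids -/

lemma exists_first_grid_index {h u₀ z : ℝ} (hh : 0 < h) (hz : u₀ ≤ z) :
    ∃ i : ℕ, (∀ k : ℕ, i ≤ k ↔ z < u₀ + k * h) ∧ u₀ + i * h ≤ z + h := by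
  have hz' : 0 ≤ (z - u₀) / h := div_nonneg (sub_nonneg.2 hz) hh.le
  refine ⟨⌊(z - u₀) / h⌋₊ + 1, fun k => ?_, ?_⟩
  · rw [Nat.succ_le_iff, Nat.floor_lt hz', div_lt_iff₀ hh, sub_lt_iff_lt_add']
  · have := (le_div_iff₀ hh).1 (Nat.floor_le hz')
    push_cast
    linarith

lemma stdNormalTail_le_exp_neg_div_sq {δ h v : ℝ} (hδ : 0 < δ) (hh : 0 < h) (hv : δ ≤ v * h) :
    stdNormalTail v ≤ exp (-(δ ^ 2 / 2 / h ^ 2)) := by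
  have hδv : δ / h ≤ v := (div_le_iff₀ hh).2 hv
  refine (stdNormalTail_antitone hδv).trans
    ((stdNormalTail_le_exp (by positivity)).trans_eq ?_)
  congr 1
  ring

lemma stdNormalTail_sub_le_of_le_add {x h v : ℝ} (hx : 0 ≤ x) (hxv : x ≤ v) (hvx : v ≤ x + h) :
    stdNormalTail x - stdNormalTail v ≤ 2 * exp 2 * (1 + x ^ 3) * h * stdNormalTail x := by
  have hh : 0 ≤ h := by linarith
  calc stdNormalTail x - stdNormalTail v ≤ (v - x) * γ x := stdNormalTail_sub_le hx hxv
    _ ≤ h * (2 * exp 2 * (1 + x ^ 3) * stdNormalTail x) :=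
        mul_le_mul (by linarith) (stdNormalDensity_le_cube_mul_tail hx)
          (stdNormalDensity_pos x).le hh
    _ = 2 * exp 2 * (1 + x ^ 3) * h * stdNormalTail x := by ring

lemma abs_div_div_sub_one_le {S Z T a b : ℝ} (hT : 0 < T) (hb : b ≤ 1 / 2) (hS : |S - T| ≤ a * T)
    (hZ : |Z - 1| ≤ b) : |S / Z / T - 1| ≤ 2 * (a + b) := by
  have hZ' : 1 / 2 ≤ Z := by linarith [(abs_le.1 hZ).1]
  have hZ0 : 0 < Z := by linarith
  have hsplit : S / Z / T - 1 = ((S - T) - (Z - 1) * T) / (Z * T) := by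
    field_simp
    ring
  rw [hsplit, abs_div, abs_of_pos (mul_pos hZ0 hT), div_le_iff₀ (mul_pos hZ0 hT)]
  calc |(S - T) - (Z - 1) * T| ≤ a * T + b * T := by
        refine (abs_sub _ _).trans (add_le_add hS ?_)
        rw [abs_mul, abs_of_pos hT]
        gcongr
    _ = 2 * (a + b) * (1 / 2 * T) := by ring
    _ ≤ 2 * (a + b) * (Z * T) := by
        have : 0 ≤ a * T := (abs_nonneg _).trans hS
        have : 0 ≤ a := nonneg_of_mul_nonneg_left this hT
        have : 0 ≤ b := (abs_nonneg _).trans hZ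
        gcongr

/-- The weights `w k`, `k ≤ n`, placed at the grid points `u₀ + k * h`, are nearly Gaussian in the
window `|u| * h ≤ δ`, which lies inside the grid, and have total mass at most
`A * exp (-(η / h ^ 2))` outside it. In the application `h` is of order `1 / √n`. -/
structure IsNearGaussianGrid (D δ A η h u₀ : ℝ) (n : ℕ) (w : ℕ → ℝ) : Prop where
  step_pos : 0 < h
  lower : δ < -u₀ * h
  upper : δ < (u₀ + n * h) * h
  nonneg : ∀ k ≤ n, 0 ≤ w k
  near : ∀ k ≤ n, |u₀ + k * h| * h ≤ δ → IsNearGaussian D h (u₀ + k * h) (w k)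
  far : ∀ k ≤ n, δ < |u₀ + k * h| * h → (n + 1) * w k ≤ A * exp (-(η / h ^ 2))

namespace IsNearGaussianGrid

variable {D δ A η h u₀ : ℝ} {n : ℕ} {w : ℕ → ℝ}

lemma reflect (hG : IsNearGaussianGrid D δ A η h u₀ n w) :
    IsNearGaussianGrid D δ A η h (-(u₀ + n * h)) n (fun k => w (n - k)) := by
  have hpoint : ∀ k ≤ n, -(u₀ + n * h) + k * h = -(u₀ + (n - k : ℕ) * h) := fun k hk => by
    rw [Nat.cast_sub hk]
    ring
  refine ⟨hG.step_pos, by simpa only [neg_neg] using hG.upper, ?_,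
    fun k _ => hG.nonneg _ (Nat.sub_le _ _), fun k hk hwindow => ?_, fun k hk hwindow => ?_⟩
  · simpa only [neg_add_cancel_right, neg_add] using hG.lower
  · rw [hpoint k hk, abs_neg] at hwindow
    rw [hpoint k hk]
    exact (hG.near _ (Nat.sub_le _ _) hwindow).neg
  · rw [hpoint k hk, abs_neg] at hwindow
    exact hG.far _ (Nat.sub_le _ _) hwindow

lemma sum_Ico_le_of_far (hG : IsNearGaussianGrid D δ A η h u₀ n w) (hA : 0 ≤ A) {i : ℕ}
    (hfar : ∀ k, i ≤ k → δ < (u₀ + k * h) * h) :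
    ∑ k ∈ Finset.Ico i (n + 1), w k ≤ A * exp (-(η / h ^ 2)) := by
  have hn : (0 : ℝ) < n + 1 := by positivity
  calc ∑ k ∈ Finset.Ico i (n + 1), w k
      ≤ (Finset.Ico i (n + 1)).card • (A * exp (-(η / h ^ 2)) / (n + 1)) := by
        refine Finset.sum_le_card_nsmul _ _ _ fun k hk => ?_
        rw [Finset.mem_Ico] at hk
        rw [le_div_iff₀' hn]
        exact hG.far k (by omega) ((hfar k hk.1).trans_le
          (mul_le_mul_of_nonneg_right (le_abs_self _) hG.step_pos.le))
    _ ≤ (n + 1) * (A * exp (-(η / h ^ 2)) / (n + 1)) := by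
        rw [nsmul_eq_mul, Nat.card_Ico]
        gcongr
        exact_mod_cast Nat.sub_le _ _
    _ = A * exp (-(η / h ^ 2)) := mul_div_cancel₀ _ hn.ne'

lemma exists_window_end (hG : IsNearGaussianGrid D δ A η h u₀ n w) (hδ : 0 ≤ δ) (hh1 : h ≤ 1)
    (hhδ : h ≤ δ ^ 3) {x : ℝ} (hxh : x ^ 3 * h ≤ 1) {i : ℕ} (hix : u₀ + i * h ≤ x + h) :
    ∃ i', i ≤ i' ∧ i' ≤ n ∧ ∀ k : ℕ, i' ≤ k ↔ δ < (u₀ + k * h) * h := by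
  have hh := hG.step_pos
  obtain ⟨i', hi', -⟩ := exists_first_grid_index (u₀ := u₀) (z := δ / h) hh <| by
    rw [le_div_iff₀ hh]
    linarith [hG.lower]
  simp only [div_lt_iff₀ hh] at hi'
  refine ⟨i', ?_, (hi' n).2 hG.upper, hi'⟩
  by_contra! hlt
  have hxδ : x * h ≤ δ := mul_le_of_cube_mul_le_one hh.le hh1 hδ hhδ hxh
  have hi'x : u₀ + i' * h ≤ x := by
    have : ((i' : ℝ) + 1) * h ≤ i * h := by
      gcongr
      exact_mod_cast hlt
    linarith
  exact ((hi' i').1 le_rfl).not_ge ((mul_le_mul_of_nonneg_right hi'x hh.le).trans hxδ)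

lemma abs_sum_Ico_window_sub_le (hG : IsNearGaussianGrid D δ A η h u₀ n w) (hD : 0 ≤ D)
    (hDδ : D * δ ≤ 1 / 6) (hh1 : h ≤ 1) {x : ℝ} (hx : 0 ≤ x) (hxh : x ^ 3 * h ≤ 1) {i i' : ℕ}
    (hii' : i ≤ i') (hi'n : i' ≤ n + 1) (hxi : x ≤ u₀ + i * h)
    (hwindow : ∀ k < i', (u₀ + k * h) * h ≤ δ) :
    |∑ k ∈ Finset.Ico i i', w k -
        (stdNormalTail (u₀ + i * h) - stdNormalTail (u₀ + i' * h))| ≤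
      8192 * (D + 2) * exp (2 * D + 2) * (1 + x ^ 3) * h * stdNormalTail x := by
  have hh := hG.step_pos
  have hpoint : ∀ j : ℕ, u₀ + i * h + j * h = u₀ + (i + j : ℕ) * h := fun j => by
    push_cast
    ring
  have hwindow' : ∀ j < i' - i, (u₀ + i * h + j * h) * h ≤ δ := fun j hj => by
    rw [hpoint]
    exact hwindow _ (by omega)
  have hnear : ∀ j < i' - i, IsNearGaussian D h (u₀ + i * h + j * h) (w (i + j)) := fun j hj => by
    have hpos : 0 ≤ u₀ + i * h + j * h := by
      have : 0 ≤ j * h := by positivity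
      linarith
    have hj' := hwindow' j hj
    rw [hpoint] at hpos hj' ⊢
    exact hG.near _ (by omega) (by rwa [abs_of_nonneg hpos])
  have hsum := abs_sum_nearGaussian_sub_le hD hDδ hh hh1 hx hxh hxi hwindow' hnear
  rwa [hpoint, Nat.add_sub_cancel' hii', ← Finset.sum_Ico_eq_sum_range] at hsum

/-- The sum splits into a partial cell at `x`, the nearly Gaussian cells of the window, and the
negligible remainders beyond the window. -/
lemma exists_abs_sum_Ico_sub_le (hD : 0 ≤ D) (hδ : 0 < δ) (hDδ : D * δ ≤ 1 / 6) (hA : 0 ≤ A)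
    (hη : 0 < η) :
    ∃ C h₀ : ℝ, 0 < C ∧ 0 < h₀ ∧ ∀ {h u₀ : ℝ} {n : ℕ} {w : ℕ → ℝ},
      IsNearGaussianGrid D δ A η h u₀ n w → h ≤ h₀ → ∀ {x : ℝ}, 0 ≤ x → x ^ 3 * h ≤ 1 →
      ∀ {i : ℕ}, x ≤ u₀ + i * h → u₀ + i * h ≤ x + h →
      |∑ k ∈ Finset.Ico i (n + 1), w k - stdNormalTail x| ≤
        C * (1 + x ^ 3) * h * stdNormalTail x := by
  obtain ⟨C₁, h₁, hC₁, hh₁, hGaussian⟩ :=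
    exists_exp_neg_div_sq_le (η := δ ^ 2 / 2) (by positivity)
  obtain ⟨C₂, h₂, hC₂, hh₂, hweights⟩ := exists_exp_neg_div_sq_le hη
  refine ⟨2 * exp 2 + 8192 * (D + 2) * exp (2 * D + 2) + C₁ + A * C₂,
    min (min h₁ h₂) (min 1 (δ ^ 3)), by positivity, by positivity, ?_⟩
  intro h u₀ n w hG hh₀ x hx hxh i hxi hix
  simp only [le_min_iff] at hh₀
  obtain ⟨⟨hhh₁, hhh₂⟩, hh1, hhδ⟩ := hh₀
  have hh := hG.step_pos
  obtain ⟨i', hii', hi'n, hi'⟩ := hG.exists_window_end hδ.le hh1 hhδ hxh hix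
  have hi'n1 : i' ≤ n + 1 := hi'n.trans n.le_succ
  have hfirst0 := stdNormalTail_antitone hxi
  have hfirst := stdNormalTail_sub_le_of_le_add hx hxi hix
  have hcells := hG.abs_sum_Ico_window_sub_le hD hDδ hh1 hx hxh hii' hi'n1 hxi
    fun k hk => not_lt.1 fun hlt => hk.not_ge ((hi' k).2 hlt)
  have hend0 := stdNormalTail_nonneg (u₀ + i' * h)
  have hend : stdNormalTail (u₀ + i' * h) ≤ C₁ * (1 + x ^ 3) * h * stdNormalTail x :=
    (stdNormalTail_le_exp_neg_div_sq hδ hh ((hi' i').1 le_rfl).le).trans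
      (hGaussian h x hh hhh₁ hx hxh)
  have hfar0 : 0 ≤ ∑ k ∈ Finset.Ico i' (n + 1), w k :=
    Finset.sum_nonneg fun k hk => hG.nonneg k (Nat.lt_succ_iff.1 (Finset.mem_Ico.1 hk).2)
  have hfar : ∑ k ∈ Finset.Ico i' (n + 1), w k ≤
      A * (C₂ * (1 + x ^ 3) * h * stdNormalTail x) :=
    (hG.sum_Ico_le_of_far hA fun k => (hi' k).1).trans
      (mul_le_mul_of_nonneg_left (hweights h x hh hhh₂ hx hxh) hA)
  rw [← Finset.sum_Ico_consecutive w hii' hi'n1]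
  rw [abs_le] at hcells ⊢
  constructor <;> linarith

/-- The tail estimate at `0`, applied to the upper half of the grid and to the reflected lower
half, where the two normal tails add up to `1`. -/
lemma exists_abs_sum_sub_one_le (hD : 0 ≤ D) (hδ : 0 < δ) (hDδ : D * δ ≤ 1 / 6) (hA : 0 ≤ A)
    (hη : 0 < η) :
    ∃ C h₀ : ℝ, 0 < C ∧ 0 < h₀ ∧ ∀ {h u₀ : ℝ} {n : ℕ} {w : ℕ → ℝ},
      IsNearGaussianGrid D δ A η h u₀ n w → h ≤ h₀ →
      |∑ k ∈ Finset.range (n + 1), w k - 1| ≤ C * h := by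
  obtain ⟨C, h₀, hC, hh₀, hhalf⟩ := exists_abs_sum_Ico_sub_le hD hδ hDδ hA hη
  refine ⟨C, h₀, hC, hh₀, fun {h u₀ n w} hG hhh₀ => ?_⟩
  have hh := hG.step_pos
  have hu₀ : u₀ ≤ 0 := by nlinarith [hG.lower]
  have hun : 0 < u₀ + n * h := pos_of_mul_pos_left (hδ.trans hG.upper) hh.le
  obtain ⟨i, hi, hih⟩ := exists_first_grid_index hh hu₀
  have hin : i ≤ n := (hi n).2 hun
  have hi0 : 0 < u₀ + i * h := (hi i).1 le_rfl
  have hupper := hhalf hG hhh₀ le_rfl (by norm_num) hi0.le hih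
  have hreflected : -(u₀ + n * h) + (n + 1 - i : ℕ) * h = -(u₀ + i * h) + h := by
    rw [Nat.cast_sub (by omega)]
    push_cast
    ring
  have hlower := hhalf hG.reflect hhh₀ le_rfl (by norm_num) (i := n + 1 - i)
    (by rw [hreflected]; linarith) (by rw [hreflected]; linarith)
  have hreflect := Finset.sum_Ico_reflect w (n + 1 - i) (le_refl (n + 1))
  rw [Nat.sub_self, Nat.sub_sub_self (by omega), ← Finset.range_eq_Ico] at hreflect
  rw [hreflect] at hlower
  rw [← Finset.sum_range_add_sum_Ico w (by omega : i ≤ n + 1)]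
  rw [stdNormalTail_zero, abs_le] at hupper hlower
  rw [abs_le]
  constructor <;> linarith

theorem exists_abs_tail_ratio_sub_one_le (hD : 0 ≤ D) (hδ : 0 < δ) (hDδ : D * δ ≤ 1 / 6)
    (hA : 0 ≤ A) (hη : 0 < η) :
    ∃ C h₀ : ℝ, 0 < C ∧ 0 < h₀ ∧ ∀ {h u₀ : ℝ} {n : ℕ} {w : ℕ → ℝ},
      IsNearGaussianGrid D δ A η h u₀ n w → h ≤ h₀ → ∀ {x : ℝ}, 0 ≤ x → x ^ 3 * h ≤ 1 →
      |(∑ k ∈ Finset.range (n + 1) with x < u₀ + (k : ℕ) * h, w k) /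
          (∑ k ∈ Finset.range (n + 1), w k) / stdNormalTail x - 1| ≤ C * (1 + x ^ 3) * h := by
  obtain ⟨C₁, h₁, hC₁, hh₁, htail⟩ := exists_abs_sum_Ico_sub_le hD hδ hDδ hA hη
  obtain ⟨C₂, h₂, hC₂, hh₂, htotal⟩ := exists_abs_sum_sub_one_le hD hδ hDδ hA hη
  refine ⟨2 * (C₁ + C₂), min (min h₁ h₂) (1 / (2 * C₂)), by positivity, by positivity, ?_⟩
  intro h u₀ n w hG hh₀ x hx hxh
  simp only [le_min_iff] at hh₀
  obtain ⟨⟨hhh₁, hhh₂⟩, hhC₂⟩ := hh₀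
  have hh := hG.step_pos
  obtain ⟨i, hi, hih⟩ := exists_first_grid_index hh
    ((by nlinarith [hG.lower] : u₀ ≤ 0).trans hx)
  have hfilter : (Finset.range (n + 1)).filter (fun k : ℕ => x < u₀ + k * h) =
      Finset.Ico i (n + 1) := by
    ext k
    rw [Finset.mem_filter, Finset.mem_range, Finset.mem_Ico, hi k, and_comm]
  rw [hfilter]
  have hhC : C₂ * h ≤ 1 / 2 := by
    rw [le_div_iff₀ (by positivity)] at hhC₂
    linarith
  refine (abs_div_div_sub_one_le (stdNormalTail_pos hx) hhC
    (htail hG hhh₁ hx hxh ((hi i).1 le_rfl).le hih) (htotal hG hhh₂)).trans ?_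
  have : 0 ≤ C₂ * x ^ 3 * h := by positivity
  linarith

end IsNearGaussianGrid

/-! ### Binomial coefficients -/

lemma log_stirlingSeq_le {n : ℕ} (hn : n ≠ 0) :
    log (Stirling.stirlingSeq n) ≤ log √π + 1 / (12 * n) := by
  obtain ⟨k, rfl⟩ := Nat.exists_eq_succ_of_ne_zero hn
  let f : ℕ → ℝ := fun k => log (Stirling.stirlingSeq (k + 1)) - 1 / (12 * ((k + 1 : ℕ) : ℝ))
  have hmono : Monotone f := by
    refine monotone_nat_of_le_succ fun j => ?_
    have hstep := Stirling.log_stirlingSeq_sdiff_le (j + 1)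
    have htele : (1 : ℝ) / (12 * (j + 1 : ℕ) * ((j + 1 : ℕ) + 1)) =
        1 / (12 * ((j + 1 : ℕ) : ℝ)) - 1 / (12 * ((j + 1 + 1 : ℕ) : ℝ)) := by
      push_cast; field_simp; ring
    simp only [f]; linarith
  have hlim : Tendsto f atTop (nhds (log √π)) := by
    have hlog : Tendsto (fun k : ℕ => log (Stirling.stirlingSeq (k + 1))) atTop (nhds (log √π)) :=
      (Stirling.tendsto_stirlingSeq_sqrt_pi.log (by positivity)).comp (tendsto_add_atTop_nat 1)
    have hcast : Tendsto (fun k : ℕ => ((k + 1 : ℕ) : ℝ)) atTop atTop :=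
      tendsto_natCast_atTop_atTop.comp (tendsto_add_atTop_nat 1)
    simpa only [sub_zero] using hlog.sub
      (tendsto_const_nhds.div_atTop (hcast.const_mul_atTop (by norm_num : (0 : ℝ) < 12)))
  linarith [hmono.ge_of_tendsto hlim k]

lemma log_factorial_sub_stirling_mem_Icc {n : ℕ} (hn : n ≠ 0) :
    log (n.factorial : ℝ) - (n * log n - n + log n / 2 + log (2 * π) / 2) ∈
      Set.Icc 0 (1 / (12 * n) : ℝ) := by
  have hn0 : (0 : ℝ) < n := by positivity
  refine ⟨sub_nonneg.2 (Stirling.le_log_factorial_stirling hn), ?_⟩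
  have h := log_stirlingSeq_le hn
  rw [Stirling.log_stirlingSeq_formula, log_sqrt pi_pos.le, log_mul two_ne_zero hn0.ne',
    log_div hn0.ne' (exp_ne_zero _), log_exp] at h
  rw [log_mul two_ne_zero pi_ne_zero]
  linarith

lemma mul_binEntropy_div {a b : ℝ} (ha : 0 < a) (hab : a < b) :
    b * binEntropy (a / b) = b * log b - a * log a - (b - a) * log (b - a) := by
  have hb : b ≠ 0 := (ha.trans hab).ne'
  rw [binEntropy, show 1 - a / b = (b - a) / b by field_simp, inv_div, inv_div,
    log_div hb ha.ne', log_div hb (sub_pos.2 hab).ne']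
  field_simp
  ring

lemma abs_log_choose_sub_le {n k : ℕ} (hk : 0 < k) (hkn : k < n) :
    |log (n.choose k) - (n * binEntropy (k / n) + log (n / (2 * π * k * (n - k))) / 2)| ≤
      (1 / k + 1 / (n - k)) / 12 := by
  have hk0 : (0 : ℝ) < k := by exact_mod_cast hk
  have hn0 : (0 : ℝ) < n := by exact_mod_cast hk.trans hkn
  have hkn0 : (k : ℝ) < n := by exact_mod_cast hkn
  have hl0 : (0 : ℝ) < n - k := sub_pos.2 hkn0
  have hcast : ((n - k : ℕ) : ℝ) = n - k := Nat.cast_sub hkn.le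
  have hfact : log (n.choose k : ℝ) + log k.factorial + log (n - k).factorial =
      log n.factorial := by
    rw [← Nat.choose_mul_factorial_mul_factorial hkn.le]
    have hc : (n.choose k : ℝ) ≠ 0 := by exact_mod_cast (Nat.choose_pos hkn.le).ne'
    push_cast
    rw [log_mul (by positivity) (by positivity), log_mul hc (by positivity)]
  obtain ⟨hn1, hn2⟩ := log_factorial_sub_stirling_mem_Icc (hk.trans hkn).ne'
  obtain ⟨hk1, hk2⟩ := log_factorial_sub_stirling_mem_Icc hk.ne'
  obtain ⟨hl1, hl2⟩ := log_factorial_sub_stirling_mem_Icc (Nat.sub_pos_of_lt hkn).ne'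
  rw [hcast] at hl1 hl2
  have hprefactor : log (n / (2 * π * k * (n - k))) =
      log n - (log (2 * π) + log k + log (n - k)) := by
    rw [log_div hn0.ne' (by positivity), log_mul (by positivity) hl0.ne',
      log_mul (by positivity) hk0.ne']
  have hmono : 1 / (12 * n : ℝ) ≤ 1 / (12 * k) := by gcongr
  have : 0 ≤ 1 / (12 * (n - k : ℝ)) := by positivity
  have hsplit : ((1 / k + 1 / (n - k)) / 12 : ℝ) = 1 / (12 * k) + 1 / (12 * (n - k)) := by
    field_simp
  rw [mul_binEntropy_div hk0 hkn0, hprefactor, hsplit, abs_le]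
  constructor <;> linarith

lemma pow_eq_exp_mul_log {t c : ℝ} {j : ℕ} (ht : 0 ≤ t) (hj : (j : ℝ) = c * t) :
    t ^ j = exp (j * log t) := by
  rcases ht.eq_or_lt with rfl | ht
  · have : j = 0 := by simpa using hj
    simp [this]
  · rw [mul_comm, exp_mul, exp_log ht, rpow_natCast]

-- A single term of the binomial expansion of `(p + (1 - p)) ^ n = 1` at `p = k / n`.
lemma choose_le_exp_binEntropy {n k : ℕ} (hkn : k ≤ n) :
    (n.choose k : ℝ) ≤ exp (n * binEntropy (k / n)) := by
  rcases n.eq_zero_or_pos with rfl | hn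
  · simp [Nat.le_zero.1 hkn]
  have hn0 : (0 : ℝ) < n := by exact_mod_cast hn
  have hkn0 : (k : ℝ) ≤ n := by exact_mod_cast hkn
  have hkp : (k : ℝ) = n * (k / n) := by field_simp
  set p : ℝ := k / n
  have hp0 : 0 ≤ p := by positivity
  have hp1 : 0 ≤ 1 - p := sub_nonneg.2 (div_le_one_of_le₀ hkn0 hn0.le)
  have hlp : ((n - k : ℕ) : ℝ) = n * (1 - p) := by rw [Nat.cast_sub hkn]; linarith
  have hterm : p ^ k * (1 - p) ^ (n - k) * n.choose k ≤ 1 := by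
    calc _ ≤ ∑ i ∈ Finset.range (n + 1), p ^ i * (1 - p) ^ (n - i) * n.choose i :=
          Finset.single_le_sum (f := fun i => p ^ i * (1 - p) ^ (n - i) * (n.choose i : ℝ))
            (fun i _ => by positivity) (Finset.mem_range.2 (by omega))
      _ = 1 := by rw [← add_pow, add_sub_cancel, one_pow]
  rw [pow_eq_exp_mul_log hp0 hkp, pow_eq_exp_mul_log hp1 hlp, ← exp_add, mul_comm,
    ← le_div_iff₀ (exp_pos _), one_div, ← exp_neg] at hterm
  refine hterm.trans_eq (congrArg exp ?_)
  rw [hlp, hkp, binEntropy, log_inv, log_inv]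
  ring

/-! ### The free energy near and away from its minimizer -/

lemma isBigO_sub_sum_iteratedDeriv {E : Type*} [NormedAddCommGroup E] [NormedSpace ℝ E]
    {f : ℝ → E} {a : ℝ} {n : ℕ} (hf : ContDiffAt ℝ (n + 1) f a) :
    (fun x => f x - ∑ k ∈ Finset.range (n + 1),
        ((k.factorial : ℝ)⁻¹ * (x - a) ^ k) • iteratedDeriv k f a) =O[nhds a]
      fun x => (x - a) ^ (n + 1) := by
  obtain ⟨s, hs, hfs⟩ := hf.contDiffOn le_rfl (by simp)
  obtain ⟨ε, hε, hball⟩ := Metric.mem_nhds_iff.1 hs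
  have ha : a ∈ Metric.ball a ε := Metric.mem_ball_self hε
  have htaylor := taylor_isLittleO (n := n + 1) (convex_ball a ε) ha
    (by exact_mod_cast hfs.mono hball)
  rw [Metric.isOpen_ball.nhdsWithin_eq ha] at htaylor
  have htop : (fun x => ((((n + 1).factorial : ℝ)⁻¹ * (x - a) ^ (n + 1)) •
      iteratedDeriv (n + 1) f a)) =O[nhds a] fun x => (x - a) ^ (n + 1) := by
    refine .of_bound (((n + 1).factorial : ℝ)⁻¹ * ‖iteratedDeriv (n + 1) f a‖)
      (.of_forall fun x => ?_)
    rw [norm_smul, norm_mul, norm_inv, RCLike.norm_natCast]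
    exact le_of_eq (by ring)
  refine (htaylor.isBigO.add htop).congr_left fun x => ?_
  have hiter : ∀ k, iteratedDerivWithin k f (Metric.ball a ε) a = iteratedDeriv k f a :=
    fun k => iteratedDerivWithin_of_isOpen Metric.isOpen_ball ha
  rw [taylor_within_apply, Finset.sum_range_succ]
  simp only [hiter]
  abel

lemma exists_pos_add_le_of_forall_lt {X : Type*} [PseudoMetricSpace X] {s : Set X} {f : X → ℝ}
    {a : X} {δ : ℝ} (hs : IsCompact s) (hf : ContinuousOn f s) (hδ : 0 < δ)
    (hlt : ∀ x ∈ s, x ≠ a → f a < f x) :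
    ∃ η > 0, ∀ x ∈ s, δ ≤ dist x a → f a + η ≤ f x := by
  have hfar : IsCompact (s ∩ {x | δ ≤ dist x a}) :=
    hs.inter_right (isClosed_le continuous_const (by fun_prop))
  obtain ⟨b, hab, hb⟩ := hfar.exists_forall_le' (hf.mono Set.inter_subset_left)
    fun x hx => hlt x hx.1 fun hxa => by
      have : δ ≤ dist x a := hx.2
      rw [hxa, dist_self] at this
      linarith
  exact ⟨b - f a, sub_pos.2 hab, fun x hx hd => by linarith [hb x ⟨hx, hd⟩]⟩

lemma binEnt_eq_neg_binEntropy (m : ℝ) : binEnt m = -binEntropy ((1 + m) / 2) := by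
  rw [binEnt, binEntropy, log_inv, log_inv, show 1 - (1 + m) / 2 = (1 - m) / 2 by ring]
  ring

lemma continuous_binEnt : Continuous binEnt := by
  simp only [funext binEnt_eq_neg_binEntropy]
  fun_prop

lemma one_sub_sq_pos {m : ℝ} (hm : m ∈ Set.Ioo (-1 : ℝ) 1) : 0 < 1 - m ^ 2 := by
  nlinarith [mul_pos (sub_pos.2 hm.1) (sub_pos.2 hm.2)]

lemma contDiffAt_binEnt {n : WithTop ℕ∞} {m : ℝ} (hm : m ∈ Set.Ioo (-1 : ℝ) 1) :
    ContDiffAt ℝ n binEnt m := by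
  have hminus : (1 - m) / 2 ≠ 0 := by linarith [hm.2]
  have hplus : (1 + m) / 2 ≠ 0 := by linarith [hm.1]
  unfold binEnt
  fun_prop (disch := assumption)

/-- The mean-field free energy `φ = I - g` of an interaction `g` of the magnetization per
particle. -/
noncomputable def freeEnergy (g : ℝ → ℝ) (m : ℝ) : ℝ := binEnt m - g m

lemma exists_pos_freeEnergy_add_le {g : ℝ → ℝ} {a δ : ℝ}
    (hg : ContinuousOn g (Set.Icc (-1) 1))
    (hmin : ∀ m ∈ Set.Icc (-1 : ℝ) 1, m ≠ a → freeEnergy g a < freeEnergy g m) (hδ : 0 < δ) :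
    ∃ η > 0, ∀ m ∈ Set.Icc (-1 : ℝ) 1, δ ≤ |m - a| → freeEnergy g a + η ≤ freeEnergy g m :=
  exists_pos_add_le_of_forall_lt isCompact_Icc (continuous_binEnt.continuousOn.sub hg) hδ hmin

lemma deriv_freeEnergy_eq_zero {g : ℝ → ℝ} {a : ℝ} (ha : a ∈ Set.Ioo (-1 : ℝ) 1)
    (hmin : ∀ m ∈ Set.Icc (-1 : ℝ) 1, m ≠ a → freeEnergy g a < freeEnergy g m) :
    deriv (freeEnergy g) a = 0 := by
  refine IsLocalMin.deriv_eq_zero ?_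
  filter_upwards [Icc_mem_nhds ha.1 ha.2] with m hm
  rcases eq_or_ne m a with rfl | hne
  exacts [le_rfl, (hmin m hm hne).le]

lemma freeEnergy_sub_quadratic_isBigO {g : ℝ → ℝ} {a : ℝ} (ha : a ∈ Set.Ioo (-1 : ℝ) 1)
    (hg : ContDiffAt ℝ 3 g a) (hderiv : deriv (freeEnergy g) a = 0) :
    (fun m => freeEnergy g m - freeEnergy g a -
        iteratedDeriv 2 (freeEnergy g) a / 2 * (m - a) ^ 2) =O[nhds a]
      fun m => (m - a) ^ 3 := by
  have hφ : ContDiffAt ℝ ((2 : ℕ) + 1) (freeEnergy g) a := by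
    exact_mod_cast (contDiffAt_binEnt (n := 3) ha).sub hg
  refine (isBigO_sub_sum_iteratedDeriv hφ).congr_left fun m => ?_
  simp only [Finset.sum_range_succ, Finset.sum_range_zero, iteratedDeriv_zero, iteratedDeriv_one,
    hderiv, Nat.factorial, smul_eq_mul]
  push_cast
  ring

lemma exists_forall_log_one_sub_sq_and_freeEnergy_close {g : ℝ → ℝ} {a : ℝ}
    (ha : a ∈ Set.Ioo (-1 : ℝ) 1) (hg : ContDiffAt ℝ 3 g a)
    (hderiv : deriv (freeEnergy g) a = 0) :
    ∃ M > 0, ∃ ε > 0, ∀ m, |m - a| ≤ ε →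
      (1 - a ^ 2) / 2 ≤ 1 - m ^ 2 ∧ |log (1 - m ^ 2) - log (1 - a ^ 2)| ≤ M * |m - a| ∧
      |freeEnergy g m - freeEnergy g a - iteratedDeriv 2 (freeEnergy g) a / 2 * (m - a) ^ 2| ≤
        M * |m - a| ^ 3 := by
  have ha2 := one_sub_sq_pos ha
  have hlog : DifferentiableAt ℝ (fun m : ℝ => log (1 - m ^ 2)) a :=
    DifferentiableAt.log (by fun_prop) ha2.ne'
  obtain ⟨M₁, hM₁, hb₁⟩ := hlog.isBigO_sub.exists_pos
  obtain ⟨M₂, -, hb₂⟩ := (freeEnergy_sub_quadratic_isBigO ha hg hderiv).exists_pos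
  have hcont : ∀ᶠ m in nhds a, (1 - a ^ 2) / 2 ≤ 1 - m ^ 2 :=
    Tendsto.eventually_const_le (half_lt_self ha2)
      (by fun_prop : ContinuousAt (fun m : ℝ => 1 - m ^ 2) a)
  obtain ⟨ε, hε, hball⟩ := Metric.nhds_basis_closedBall.eventually_iff.1
    (hcont.and (hb₁.bound.and hb₂.bound))
  refine ⟨max M₁ M₂, by positivity, ε, hε, fun m hm => ?_⟩
  obtain ⟨h₀, h₁, h₂⟩ := hball (Metric.mem_closedBall.2 hm)
  simp only [norm_eq_abs, abs_pow] at h₁ h₂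
  exact ⟨h₀, h₁.trans (by gcongr; exact le_max_left _ _),
    h₂.trans (by gcongr; exact le_max_right _ _)⟩

/-! ### The law of the total magnetization -/

lemma real_inv_sum_smul_sum_dirac_apply {Ω : Type*} [Fintype Ω] [MeasurableSpace Ω]
    [MeasurableSingletonClass Ω] {w : Ω → ℝ} (hw : ∀ x, 0 ≤ w x) (p : Ω → Prop)
    [DecidablePred p] :
    ((∑ x, ENNReal.ofReal (w x))⁻¹ • ∑ x, ENNReal.ofReal (w x) • Measure.dirac x).real
        {x | p x} = (∑ x with p x, w x) / ∑ x, w x := by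
  have hmass : (∑ x, ENNReal.ofReal (w x) • Measure.dirac x) {x | p x} =
      ENNReal.ofReal (∑ x with p x, w x) := by
    rw [Measure.finsetSum_apply, ENNReal.ofReal_sum_of_nonneg fun x _ => hw x, Finset.sum_filter]
    refine Finset.sum_congr rfl fun x _ => ?_
    by_cases hx : p x <;> simp [hx]
  rw [measureReal_def, Measure.smul_apply, hmass, ← ENNReal.ofReal_sum_of_nonneg fun x _ => hw x,
    smul_eq_mul, ENNReal.toReal_mul, ENNReal.toReal_inv,
    ENNReal.toReal_ofReal (Finset.sum_nonneg fun x _ => hw x),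
    ENNReal.toReal_ofReal (Finset.sum_nonneg fun x _ => hw x), inv_mul_eq_div]

lemma totalMag_decide_mem {n : ℕ} (s : Finset (Fin n)) :
    totalMag n (fun i => decide (i ∈ s)) = 2 * s.card - n := by
  have hspin : ∀ i, spin (decide (i ∈ s)) = 2 * (if i ∈ s then 1 else 0) - 1 := fun i => by
    by_cases hi : i ∈ s <;> norm_num [spin, hi]
  simp [totalMag, hspin, mul_comm]

lemma sum_apply_totalMag {M : Type*} [AddCommMonoid M] (n : ℕ) (f : ℝ → M) :
    ∑ y, f (totalMag n y) = ∑ k ∈ Finset.range (n + 1), n.choose k • f (2 * k - n) := by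
  let plusSpins : (Fin n → Bool) ≃ Finset (Fin n) :=
    { toFun := fun y => {i | y i = true}
      invFun := fun s i => decide (i ∈ s)
      left_inv := fun y => by ext; simp
      right_inv := fun s => by ext; simp }
  rw [← plusSpins.symm.sum_comp]
  have hcard := Finset.sum_powerset_apply_card (fun k : ℕ => f (2 * k - n))
    (x := (Finset.univ : Finset (Fin n)))
  rw [Finset.powerset_univ, Finset.card_univ, Fintype.card_fin] at hcard
  rw [← hcard]
  exact Finset.sum_congr rfl fun s _ => congrArg f (totalMag_decide_mem s)

/-- The Gibbs measure with density proportional to `exp (n g(m_n))` with respect to the uniform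
measure on configurations; the cubic model is `g m = K / 3 * m ^ 3 + J / 2 * m ^ 2`. -/
noncomputable def meanFieldMeasure (n : ℕ) (g : ℝ → ℝ) : Measure (Fin n → Bool) :=
  (∑ x : Fin n → Bool, ENNReal.ofReal (exp (n * g (magPP n x))))⁻¹ •
    ∑ x : Fin n → Bool, ENNReal.ofReal (exp (n * g (magPP n x))) • Measure.dirac x

/-- The magnetization per particle of a configuration of `n` spins, `k` of which are `+1`. -/
noncomputable def levelMag (n k : ℕ) : ℝ := (2 * k - n) / n

/-- The total weight `∑ exp (n g(m_n))` of the configurations with `k` spins `+1`. -/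
noncomputable def levelWeight (g : ℝ → ℝ) (n k : ℕ) : ℝ :=
  n.choose k * exp (n * g (levelMag n k))

lemma meanFieldMeasure_real_totalMag (n : ℕ) (g : ℝ → ℝ) (p : ℝ → Prop) [DecidablePred p] :
    (meanFieldMeasure n g).real {y | p (totalMag n y)} =
      (∑ k ∈ Finset.range (n + 1) with p (2 * (k : ℕ) - n), levelWeight g n k) /
        ∑ k ∈ Finset.range (n + 1), levelWeight g n k := by
  have hlevel : ∀ q : ℝ → Prop, ∀ [DecidablePred q],
      ∑ y with q (totalMag n y), exp (n * g (magPP n y)) =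
        ∑ k ∈ Finset.range (n + 1) with q (2 * (k : ℕ) - n), levelWeight g n k := fun q _ => by
    have hsum := sum_apply_totalMag n fun t => if q t then exp (n * g (t / n)) else 0
    simpa only [Finset.sum_filter, levelWeight, levelMag, magPP, nsmul_eq_mul, mul_ite, mul_zero]
      using hsum
  rw [meanFieldMeasure,
    real_inv_sum_smul_sum_dirac_apply (fun y => (exp_pos _).le) fun y => p (totalMag n y), hlevel p]
  simpa using congrArg _ (hlevel fun _ => True)

instance isProbabilityMeasure_meanFieldMeasure (n : ℕ) (g : ℝ → ℝ) :
    IsProbabilityMeasure (meanFieldMeasure n g) := by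
  refine ⟨?_⟩
  have hpos : (0 : ℝ) < ∑ x : Fin n → Bool, exp (n * g (magPP n x)) :=
    Finset.sum_pos (fun x _ => exp_pos _) Finset.univ_nonempty
  have hreal := real_inv_sum_smul_sum_dirac_apply
    (fun x : Fin n → Bool => (exp_pos (n * g (magPP n x))).le) fun _ => True
  rw [← meanFieldMeasure, Finset.filter_true, div_self hpos.ne', Set.ofPred_true] at hreal
  exact (ENNReal.toReal_eq_one_iff _).1 hreal

/-! ### Level weights as a nearly Gaussian grid -/

/-- The spacing `2 / σ_n` of the values of `W_n`, where `σ_n = √(n / v)`. -/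
noncomputable def gridStep (v : ℝ) (n : ℕ) : ℝ := 2 * √v / √n

/-- Level weights in the scale in which those near `m = a` are `gridStep v n` times the Gaussian
density up to a factor close to one, where `v = φ''(a)`. -/
noncomputable def scaledLevelWeight (g : ℝ → ℝ) (a : ℝ) (n k : ℕ) : ℝ :=
  √(iteratedDeriv 2 (freeEnergy g) a * (1 - a ^ 2)) * exp (n * freeEnergy g a) *
    levelWeight g n k

lemma one_sub_levelMag_sq {n : ℕ} (k : ℕ) (hn : 0 < n) :
    1 - levelMag n k ^ 2 = 4 * k * (n - k) / n ^ 2 := by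
  rw [levelMag]; field_simp; ring

lemma levelMag_mem_Icc {n k : ℕ} (hn : 0 < n) (hkn : k ≤ n) :
    levelMag n k ∈ Set.Icc (-1 : ℝ) 1 := by
  have hn0 : (0 : ℝ) < n := by exact_mod_cast hn
  have hkn0 : (k : ℝ) ≤ n := by exact_mod_cast hkn
  rw [levelMag, Set.mem_Icc, le_div_iff₀ hn0, div_le_iff₀ hn0]
  constructor <;> linarith [k.cast_nonneg (α := ℝ)]

lemma binEnt_levelMag {n : ℕ} (k : ℕ) (hn : 0 < n) :
    binEnt (levelMag n k) = -binEntropy (k / n) := by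
  rw [binEnt_eq_neg_binEntropy, levelMag]
  congr 2
  field_simp
  ring

lemma pos_and_lt_of_one_sub_levelMag_sq_pos {n k : ℕ} (hn : 0 < n)
    (h : 0 < 1 - levelMag n k ^ 2) : 0 < k ∧ k < n := by
  rw [one_sub_levelMag_sq k hn, div_pos_iff_of_pos_right (by positivity)] at h
  have hk : 0 < k := Nat.pos_of_ne_zero fun hk => by simp [hk] at h
  have hkn : (k : ℝ) < n := sub_pos.1 (pos_of_mul_pos_right h (by positivity))
  exact ⟨hk, by exact_mod_cast hkn⟩

lemma abs_log_choose_add_binEnt_sub_le {n k : ℕ} (hk : 0 < k) (hkn : k < n) :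
    |log (n.choose k) + n * binEnt (levelMag n k) -
        log (2 / (π * n * (1 - levelMag n k ^ 2))) / 2| ≤ 1 / (3 * n * (1 - levelMag n k ^ 2)) := by
  have hn := hk.trans hkn
  have hkn0 : (k : ℝ) < n := by exact_mod_cast hkn
  have hl : (n - k : ℝ) ≠ 0 := (sub_pos.2 hkn0).ne'
  have hprefactor : 2 / (π * n * (1 - levelMag n k ^ 2)) = n / (2 * π * k * (n - k)) := by
    rw [one_sub_levelMag_sq k hn]; field_simp; norm_num
  have herror : 1 / (3 * n * (1 - levelMag n k ^ 2)) = (1 / k + 1 / (n - k)) / 12 := by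
    rw [one_sub_levelMag_sq k hn]; field_simp; ring
  rw [hprefactor, herror, binEnt_levelMag k hn]
  convert abs_log_choose_sub_le hk hkn using 2
  ring

lemma sqrt_eq_exp_half_log {x : ℝ} (hx : 0 < x) : √x = exp (log x / 2) := by
  rw [exp_half, exp_log hx]

lemma gridStep_mul_inv_sqrt_two_pi (v : ℝ) (n : ℕ) :
    gridStep v n * (√(2 * π))⁻¹ = √(2 * v / (π * n)) := by
  have h2 : (√2 : ℝ) ^ 2 = 2 := sq_sqrt zero_le_two
  rw [gridStep, sqrt_mul zero_le_two, sqrt_div' _ (by positivity), sqrt_mul zero_le_two,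
    sqrt_mul pi_pos.le]
  field_simp
  rw [h2, mul_comm]

lemma scaledLevelWeight_eq {g : ℝ → ℝ} {a v : ℝ} (ha : a ∈ Set.Ioo (-1 : ℝ) 1)
    (hv : iteratedDeriv 2 (freeEnergy g) a = v) (hv0 : 0 < v) {n k : ℕ} (hk : 0 < k)
    (hkn : k < n) {m : ℝ} (hm : levelMag n k = m) :
    scaledLevelWeight g a n k = gridStep v n * γ (√n * √v * (m - a)) *
      exp (log (n.choose k) + n * binEnt m - log (2 / (π * n * (1 - m ^ 2))) / 2 -
        (log (1 - m ^ 2) - log (1 - a ^ 2)) / 2 -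
        n * (freeEnergy g m - freeEnergy g a - v / 2 * (m - a) ^ 2)) := by
  have hn0 : (0 : ℝ) < n := by exact_mod_cast hk.trans hkn
  have hkn0 : (k : ℝ) < n := by exact_mod_cast hkn
  have hm2 : 0 < 1 - m ^ 2 := by
    rw [← hm, one_sub_levelMag_sq k (hk.trans hkn)]
    have := sub_pos.2 hkn0
    positivity
  have ha2 := one_sub_sq_pos ha
  have hc : (0 : ℝ) < n.choose k := by exact_mod_cast Nat.choose_pos hkn.le
  have hu : (√n * √v * (m - a)) ^ 2 = n * v * (m - a) ^ 2 := by
    rw [mul_pow, mul_pow, sq_sqrt hn0.le, sq_sqrt hv0.le]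
  rw [scaledLevelWeight, levelWeight, hm, hv, stdNormalDensity_eq, ← mul_assoc (gridStep v n),
    gridStep_mul_inv_sqrt_two_pi, hu, sqrt_eq_exp_half_log (by positivity),
    sqrt_eq_exp_half_log (by positivity), ← exp_log hc, log_exp]
  simp only [← exp_add]
  rw [log_mul hv0.ne' ha2.ne', log_div (by positivity) (by positivity),
    log_div two_ne_zero (by positivity), log_mul two_ne_zero hv0.ne',
    log_mul pi_ne_zero hn0.ne', log_mul (by positivity) hm2.ne', log_mul pi_ne_zero hn0.ne']
  unfold freeEnergy
  ring_nf

-- With `u = √(n v) (m - a)` the three terms are `h / √n`, `|u| h` and `|u| ^ 3 h` up to constants.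
lemma inv_add_abs_add_mul_abs_cube_le {v t : ℝ} (hv : 0 < v) {n : ℕ} (hn : 0 < n) :
    1 / n + |t| + n * |t| ^ 3 ≤
      (1 / √v + 1 / v + 1 / v ^ 2) / 2 * (1 + |√n * √v * t| ^ 3) * gridStep v n := by
  obtain ⟨s, hs, rfl⟩ : ∃ s, 0 < s ∧ s ^ 2 = v := ⟨√v, sqrt_pos.2 hv, sq_sqrt hv.le⟩
  obtain ⟨r, hr, hrn⟩ : ∃ r, 1 ≤ r ∧ r ^ 2 = (n : ℝ) :=
    ⟨√n, one_le_sqrt.2 (by exact_mod_cast hn), sq_sqrt n.cast_nonneg⟩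
  have hr0 : 0 < r := by linarith
  rw [gridStep, ← hrn, sqrt_sq hs.le, sqrt_sq hr0.le, abs_mul, abs_of_pos (mul_pos hr0 hs)]
  set U := r * s * |t| with hU
  have ht : |t| = U / (r * s) := by rw [hU]; field_simp
  have hU0 : 0 ≤ U := by positivity
  calc 1 / r ^ 2 + |t| + r ^ 2 * |t| ^ 3 = (1 / r + U / s + U ^ 3 / s ^ 3) / r := by
        rw [ht]; field_simp
    _ ≤ ((1 + U ^ 3) + (1 + U ^ 3) / s + (1 + U ^ 3) / s ^ 3) / r := by
        have hr1 : 1 / r ≤ 1 + U ^ 3 :=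
          (div_le_one_of_le₀ hr hr0.le).trans (le_add_of_nonneg_right (by positivity))
        have hU1 := le_one_add_cube hU0
        gcongr
        linarith
    _ = (1 / s + 1 / s ^ 2 + 1 / (s ^ 2) ^ 2) / 2 * (1 + U ^ 3) * (2 * s / r) := by field_simp

lemma exists_scaledLevelWeight_isNearGaussian {g : ℝ → ℝ} {a v : ℝ}
    (ha : a ∈ Set.Ioo (-1 : ℝ) 1) (hg : ContDiffAt ℝ 3 g a) (hderiv : deriv (freeEnergy g) a = 0)
    (hv : iteratedDeriv 2 (freeEnergy g) a = v) (hv0 : 0 < v) :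
    ∃ D > 0, ∃ ε > 0, ∀ {n k : ℕ}, 0 < n → |levelMag n k - a| ≤ ε →
      IsNearGaussian D (gridStep v n) (√n * √v * (levelMag n k - a))
        (scaledLevelWeight g a n k) := by
  obtain ⟨M, hM, ε, hε, hclose⟩ := exists_forall_log_one_sub_sq_and_freeEnergy_close ha hg hderiv
  have ha2 := one_sub_sq_pos ha
  set B := 1 / (1 - a ^ 2) + M with hB
  refine ⟨B * ((1 / √v + 1 / v + 1 / v ^ 2) / 2), by positivity, ε, hε, fun {n k} hn hm => ?_⟩
  have hn0 : (0 : ℝ) < n := by exact_mod_cast hn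
  obtain ⟨hm2, hlog, hφ⟩ := hclose _ hm
  obtain ⟨hk, hkn⟩ := pos_and_lt_of_one_sub_levelMag_sq_pos hn (by linarith)
  refine ⟨_, ?_, scaledLevelWeight_eq ha hv hv0 hk hkn rfl⟩
  have hchoose := abs_log_choose_add_binEnt_sub_le hk hkn
  rw [hv] at hφ
  set m := levelMag n k
  have hstirling : 1 / (3 * n * (1 - m ^ 2)) ≤ 1 / (1 - a ^ 2) * (1 / n) := by
    rw [one_div_mul_one_div]
    exact one_div_le_one_div_of_le (by positivity) (by nlinarith)
  have hφn : |n * (freeEnergy g m - freeEnergy g a - v / 2 * (m - a) ^ 2)| ≤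
      n * (M * |m - a| ^ 3) := by
    rw [abs_mul, abs_of_pos hn0]; gcongr
  have hlog2 : |(log (1 - m ^ 2) - log (1 - a ^ 2)) / 2| ≤ M * |m - a| := by
    rw [abs_div, abs_two]
    linarith [abs_nonneg (log (1 - m ^ 2) - log (1 - a ^ 2))]
  calc _ ≤ 1 / (1 - a ^ 2) * (1 / n) + M * |m - a| + n * (M * |m - a| ^ 3) :=
        (abs_sub _ _).trans (add_le_add ((abs_sub _ _).trans
          (add_le_add (hchoose.trans hstirling) hlog2)) hφn)
    _ ≤ B * (1 / n + |m - a| + n * |m - a| ^ 3) := by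
        have : 0 ≤ 1 / (1 - a ^ 2) * (|m - a| + n * |m - a| ^ 3) + M * (1 / n) := by positivity
        rw [hB]
        linarith
    _ ≤ _ := by
        rw [mul_assoc B, mul_assoc B]
        gcongr
        exact inv_add_abs_add_mul_abs_cube_le hv0 hn

lemma scaledLevelWeight_nonneg (g : ℝ → ℝ) (a : ℝ) (n k : ℕ) : 0 ≤ scaledLevelWeight g a n k := by
  unfold scaledLevelWeight levelWeight
  positivity

lemma levelWeight_le_exp_neg_mul_freeEnergy (g : ℝ → ℝ) {n k : ℕ} (hn : 0 < n) (hkn : k ≤ n) :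
    levelWeight g n k ≤ exp (-(n * freeEnergy g (levelMag n k))) := by
  calc levelWeight g n k
      ≤ exp (n * binEntropy (k / n)) * exp (n * g (levelMag n k)) := by
        unfold levelWeight
        gcongr
        exact choose_le_exp_binEntropy hkn
    _ = exp (-(n * freeEnergy g (levelMag n k))) := by
        rw [← exp_add, freeEnergy, binEnt_levelMag k hn]
        ring_nf

lemma succ_mul_scaledLevelWeight_le {g : ℝ → ℝ} {a v η : ℝ} {n k : ℕ} (hn : 0 < n)
    (hkn : k ≤ n) (hv : iteratedDeriv 2 (freeEnergy g) a = v) (hη : 0 < η)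
    (hgap : freeEnergy g a + η ≤ freeEnergy g (levelMag n k)) :
    (n + 1) * scaledLevelWeight g a n k ≤
      √(v * (1 - a ^ 2)) * (1 + 2 / η) * exp (-(n * η / 2)) := by
  set E := exp (-(n * η / 2)) with hE
  have hdecay : exp (n * freeEnergy g a) * levelWeight g n k ≤ E * E := by
    calc _ ≤ exp (n * freeEnergy g a) * exp (-(n * freeEnergy g (levelMag n k))) := by
          gcongr
          exact levelWeight_le_exp_neg_mul_freeEnergy g hn hkn
      _ ≤ E * E := by
          rw [hE, ← exp_add, ← exp_add, exp_le_exp]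
          nlinarith
  have hlinear : (n + 1) * E ≤ 1 + 2 / η := by
    rw [hE, exp_neg, ← div_eq_mul_inv, div_le_iff₀ (exp_pos _)]
    calc (n + 1 : ℝ) ≤ (1 + 2 / η) * (n * η / 2 + 1) := by
          have : 0 ≤ n * η / 2 + 2 / η := by positivity
          field_simp at this ⊢
          linarith
      _ ≤ (1 + 2 / η) * exp (n * η / 2) := by gcongr; exact add_one_le_exp _
  rw [scaledLevelWeight, hv]
  calc _ = √(v * (1 - a ^ 2)) * ((n + 1) * (exp (n * freeEnergy g a) * levelWeight g n k)) := by
        ring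
    _ ≤ √(v * (1 - a ^ 2)) * ((n + 1) * (E * E)) := by gcongr
    _ = √(v * (1 - a ^ 2)) * ((n + 1) * E) * E := by ring
    _ ≤ _ := by gcongr

lemma gridStep_sq {v : ℝ} (hv : 0 ≤ v) (n : ℕ) : gridStep v n ^ 2 = 4 * v / n := by
  rw [gridStep, div_pow, mul_pow, sq_sqrt hv, sq_sqrt n.cast_nonneg]
  norm_num

lemma gridPoint_eq {v a : ℝ} {n : ℕ} (k : ℕ) (hn : 0 < n) :
    -(√n * √v * (1 + a)) + k * gridStep v n = √n * √v * (levelMag n k - a) := by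
  obtain ⟨r, hr, hrn⟩ : ∃ r, 0 < r ∧ r ^ 2 = (n : ℝ) :=
    ⟨√n, by positivity, sq_sqrt n.cast_nonneg⟩
  rw [gridStep, levelMag, ← hrn, sqrt_sq hr.le]
  field_simp
  ring

lemma sqrt_mul_sqrt_mul_gridStep {v : ℝ} (t : ℝ) {n : ℕ} (hv : 0 ≤ v) (hn : 0 < n) :
    √n * √v * t * gridStep v n = 2 * v * t := by
  have hv2 := sq_sqrt hv
  rw [gridStep]
  field_simp
  rw [hv2, mul_comm]

lemma isNearGaussianGrid_scaledLevelWeight {g : ℝ → ℝ} {a v D ε η : ℝ} {n : ℕ} (hn : 0 < n)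
    (hv : iteratedDeriv 2 (freeEnergy g) a = v) (hv0 : 0 < v) (hη : 0 < η) (hεlower : ε < 1 + a)
    (hεupper : ε < 1 - a)
    (hnear : ∀ {k}, |levelMag n k - a| ≤ ε → IsNearGaussian D (gridStep v n)
      (√n * √v * (levelMag n k - a)) (scaledLevelWeight g a n k))
    (hgap : ∀ m ∈ Set.Icc (-1 : ℝ) 1, ε ≤ |m - a| → freeEnergy g a + η ≤ freeEnergy g m) :
    IsNearGaussianGrid D (2 * v * ε) (√(v * (1 - a ^ 2)) * (1 + 2 / η)) (2 * v * η)
      (gridStep v n) (-(√n * √v * (1 + a))) n (scaledLevelWeight g a n) := by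
  have hwindow : ∀ k : ℕ, |-(√n * √v * (1 + a)) + k * gridStep v n| * gridStep v n =
      2 * v * |levelMag n k - a| := fun k => by
    rw [gridPoint_eq k hn, abs_mul, abs_of_nonneg (by positivity),
      sqrt_mul_sqrt_mul_gridStep _ hv0.le hn]
  have hlast : levelMag n n = 1 := by rw [levelMag]; field_simp; norm_num
  refine ⟨by unfold gridStep; positivity, ?_, ?_, fun k _ => scaledLevelWeight_nonneg g a n k,
    fun k _ hk => ?_, fun k hkn hk => ?_⟩
  · rw [neg_neg, sqrt_mul_sqrt_mul_gridStep _ hv0.le hn]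
    gcongr
  · rw [gridPoint_eq n hn, sqrt_mul_sqrt_mul_gridStep _ hv0.le hn, hlast]
    gcongr
  · rw [hwindow, mul_le_mul_iff_right₀ (by positivity)] at hk
    rw [gridPoint_eq k hn]
    exact hnear hk
  · rw [hwindow, mul_lt_mul_iff_right₀ (by positivity)] at hk
    have hexponent : 2 * v * η / gridStep v n ^ 2 = n * η / 2 := by
      rw [gridStep_sq hv0.le]; field_simp; norm_num
    rw [hexponent]
    exact succ_mul_scaledLevelWeight_le hn hkn hv hη (hgap _ (levelMag_mem_Icc hn hkn) hk.le)

lemma exists_isNearGaussianGrid_scaledLevelWeight {g : ℝ → ℝ} {a v : ℝ}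
    (hg : ContinuousOn g (Set.Icc (-1) 1)) (hg3 : ContDiffAt ℝ 3 g a)
    (ha : a ∈ Set.Ioo (-1 : ℝ) 1)
    (hmin : ∀ m ∈ Set.Icc (-1 : ℝ) 1, m ≠ a → freeEnergy g a < freeEnergy g m)
    (hv : iteratedDeriv 2 (freeEnergy g) a = v) (hv0 : 0 < v) :
    ∃ D > 0, ∃ δ > 0, D * δ ≤ 1 / 6 ∧ ∃ A ≥ 0, ∃ η > 0, ∀ {n : ℕ}, 0 < n →
      IsNearGaussianGrid D δ A η (gridStep v n) (-(√n * √v * (1 + a))) n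
        (scaledLevelWeight g a n) := by
  obtain ⟨D, hD, ε₁, hε₁, hnear⟩ :=
    exists_scaledLevelWeight_isNearGaussian ha hg3 (deriv_freeEnergy_eq_zero ha hmin) hv hv0
  have ha₁ : 0 < 1 + a := by linarith [ha.1]
  have ha₂ : 0 < 1 - a := by linarith [ha.2]
  obtain ⟨ε, hε, hεlt⟩ : ∃ ε > 0, ε < min (min ε₁ (1 / (12 * v * D))) (min (1 + a) (1 - a)) :=
    exists_between (by positivity)
  simp only [lt_min_iff] at hεlt
  obtain ⟨⟨hεε₁, hεD⟩, hεlower, hεupper⟩ := hεlt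
  obtain ⟨η, hη, hgap⟩ := exists_pos_freeEnergy_add_le hg hmin hε
  rw [lt_div_iff₀ (by positivity)] at hεD
  exact ⟨D, hD, 2 * v * ε, by positivity, by linarith, _, by positivity, 2 * v * η, by positivity,
    fun hn => isNearGaussianGrid_scaledLevelWeight hn hv hv0 hη hεlower hεupper
      (fun hk => hnear hn (hk.trans hεε₁.le)) hgap⟩

lemma meanFieldMeasure_real_standardized_tail {g : ℝ → ℝ} {a v : ℝ} {n : ℕ} (hn : 0 < n)
    (ha : a ∈ Set.Ioo (-1 : ℝ) 1) (hv : iteratedDeriv 2 (freeEnergy g) a = v) (hv0 : 0 < v)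
    (x : ℝ) :
    (meanFieldMeasure n g).real {y | x < (totalMag n y - n * a) / √(n / v)} =
      (∑ k ∈ Finset.range (n + 1) with x < -(√n * √v * (1 + a)) + (k : ℕ) * gridStep v n,
        scaledLevelWeight g a n k) / ∑ k ∈ Finset.range (n + 1), scaledLevelWeight g a n k := by
  have hscale : √(v * (1 - a ^ 2)) * exp (n * freeEnergy g a) ≠ 0 := by
    have := one_sub_sq_pos ha
    positivity
  have hpoint : ∀ k : ℕ, (2 * k - n - n * a) / √(n / v) =
      -(√n * √v * (1 + a)) + k * gridStep v n := fun k => by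
    rw [gridPoint_eq k hn, levelMag, sqrt_div n.cast_nonneg]
    field_simp
    rw [sq_sqrt n.cast_nonneg]
    ring
  rw [meanFieldMeasure_real_totalMag n g fun t => x < (t - n * a) / √(n / v)]
  simp only [scaledLevelWeight, hv, ← Finset.mul_sum, hpoint]
  rw [mul_div_mul_left _ _ hscale]

/-! ### From small grid steps to all system sizes -/

lemma abs_div_stdNormalTail_sub_one_le {P x B : ℝ} (hP : P ∈ Set.Icc (0 : ℝ) 1) (hx : 0 ≤ x)
    (hxB : x ≤ B) : |P / stdNormalTail x - 1| ≤ 1 / stdNormalTail B + 1 := by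
  have hB := stdNormalTail_pos (hx.trans hxB)
  have hle : P / stdNormalTail x ≤ 1 / stdNormalTail B :=
    div_le_div₀ zero_le_one hP.2 hB (stdNormalTail_antitone hxB)
  have hnonneg : 0 ≤ P / stdNormalTail x := div_nonneg hP.1 (stdNormalTail_nonneg x)
  rw [abs_le]
  constructor <;> linarith

lemma cube_le_of_le_mul_rpow_sixth {c x : ℝ} {n : ℕ} (hx : 0 ≤ x)
    (hxc : x ≤ c * (n : ℝ) ^ ((1 : ℝ) / 6)) : x ^ 3 ≤ c ^ 3 * √n := by
  calc x ^ 3 ≤ (c * (n : ℝ) ^ ((1 : ℝ) / 6)) ^ 3 := by gcongr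
    _ = c ^ 3 * √n := by
      rw [mul_pow, ← rpow_natCast ((n : ℝ) ^ ((1 : ℝ) / 6)), ← rpow_mul n.cast_nonneg,
        sqrt_eq_rpow]
      norm_num

lemma abs_div_stdNormalTail_sub_one_le_of_sqrt_le {P x B : ℝ} {n : ℕ}
    (hP : P ∈ Set.Icc (0 : ℝ) 1) (hx : 0 ≤ x) (hn : 0 < n) (hnB : √n ≤ B) (hxn : x ^ 3 ≤ √n) :
    |P / stdNormalTail x - 1| ≤ (1 / stdNormalTail (1 + B) + 1) * B * (1 + x ^ 3) / √n := by
  have hs : 0 < √(n : ℝ) := by positivity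
  have hxB : x ≤ 1 + B := by linarith [le_one_add_cube hx]
  have hM : 0 < 1 / stdNormalTail (1 + B) + 1 := by
    have := stdNormalTail_pos (hx.trans hxB)
    positivity
  calc _ ≤ 1 / stdNormalTail (1 + B) + 1 := abs_div_stdNormalTail_sub_one_le hP hx hxB
    _ ≤ (1 / stdNormalTail (1 + B) + 1) * (B * (1 + x ^ 3) / √n) := by
        refine le_mul_of_one_le_right hM.le ((one_le_div hs).2 (hnB.trans ?_))
        exact le_mul_of_one_le_right (hs.le.trans hnB) (le_add_of_nonneg_right (by positivity))
    _ = _ := by ring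

-- When `b / √n` exceeds `h₀`, both `n` and `x` are bounded and a crude bound suffices.
lemma exists_abs_div_stdNormalTail_sub_one_le_of_small_step {P : ℕ → ℝ → ℝ} {b C₀ h₀ : ℝ}
    (hb : 0 < b) (hC₀ : 0 < C₀) (hh₀ : 0 < h₀) (hP : ∀ n x, P n x ∈ Set.Icc (0 : ℝ) 1)
    (hsmall : ∀ n : ℕ, 0 < n → ∀ x, 0 ≤ x → b / √n ≤ h₀ → x ^ 3 * (b / √n) ≤ 1 →
      |P n x / stdNormalTail x - 1| ≤ C₀ * (1 + x ^ 3) * (b / √n)) :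
    ∃ c C : ℝ, 0 < c ∧ 0 < C ∧ ∀ n : ℕ, 1 ≤ n → ∀ x : ℝ,
      0 ≤ x → x ≤ c * (n : ℝ) ^ ((1 : ℝ) / 6) →
      |P n x / stdNormalTail x - 1| ≤ C * (1 + x ^ 3) / √n := by
  set c := min 1 (1 / b)
  have hc0 : 0 < c := by positivity
  have hcube : c ^ 3 ≤ c := pow_le_of_le_one hc0.le (min_le_left _ _) three_ne_zero
  refine ⟨c, max (C₀ * b) ((1 / stdNormalTail (1 + b / h₀) + 1) * (b / h₀)), hc0, by positivity,
    fun n hn x hx hxc => ?_⟩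
  have hs : 0 < √(n : ℝ) := by positivity
  have hx3 := cube_le_of_le_mul_rpow_sixth hx hxc
  rcases le_or_gt (b / √n) h₀ with hstep | hstep
  · have hxstep : x ^ 3 * (b / √n) ≤ 1 := by
      calc x ^ 3 * (b / √n) ≤ 1 / b * √n * (b / √n) := by
            gcongr
            exact hx3.trans (by gcongr; exact hcube.trans (min_le_right _ _))
        _ = 1 := by field_simp
    calc _ ≤ C₀ * (1 + x ^ 3) * (b / √n) := hsmall n hn x hx hstep hxstep
      _ = C₀ * b * (1 + x ^ 3) / √n := by ring
      _ ≤ _ := by gcongr; exact le_max_left _ _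
  · have hnB : √n ≤ b / h₀ := by
      rw [le_div_iff₀ hh₀, mul_comm, ← le_div_iff₀ hs]
      exact hstep.le
    have hxn : x ^ 3 ≤ √n :=
      hx3.trans (mul_le_of_le_one_left hs.le (hcube.trans (min_le_left _ _)))
    exact (abs_div_stdNormalTail_sub_one_le_of_sqrt_le (hP n x) hx hn hnB hxn).trans
      (by gcongr; exact le_max_right _ _)

/-! ### Moderate deviations -/

theorem stmt_17_general (g : ℝ → ℝ) (mstar : ℝ) (hg : ContinuousOn g (Set.Icc (-1) 1))
    (hg3 : ContDiffAt ℝ 3 g mstar) (hmem : mstar ∈ Set.Ioo (-1 : ℝ) 1)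
    (hmin : ∀ y ∈ Set.Icc (-1 : ℝ) 1, y ≠ mstar → freeEnergy g mstar < freeEnergy g y)
    (hconv : 0 < iteratedDeriv 2 (freeEnergy g) mstar) :
    ∃ c C : ℝ, 0 < c ∧ 0 < C ∧ ∀ n : ℕ, 1 ≤ n → ∀ x : ℝ,
      0 ≤ x → x ≤ c * (n : ℝ) ^ ((1 : ℝ) / 6) →
      |(meanFieldMeasure n g).real
            {y | x < (totalMag n y - n * mstar) / √(n / iteratedDeriv 2 (freeEnergy g) mstar)} /
          stdNormalTail x - 1| ≤ C * (1 + x ^ 3) / √n := by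
  obtain ⟨D, hD, δ, hδ, hDδ, A, hA, η, hη, hgrid⟩ :=
    exists_isNearGaussianGrid_scaledLevelWeight hg hg3 hmem hmin rfl hconv
  obtain ⟨C₀, h₀, hC₀, hh₀, hratio⟩ :=
    IsNearGaussianGrid.exists_abs_tail_ratio_sub_one_le hD.le hδ hDδ hA hη
  refine exists_abs_div_stdNormalTail_sub_one_le_of_small_step
    (mul_pos two_pos (sqrt_pos.2 hconv)) hC₀ hh₀
    (fun n x => ⟨measureReal_nonneg, measureReal_le_one⟩) fun n hn x hx hstep hxstep => ?_
  rw [meanFieldMeasure_real_standardized_tail hn hmem rfl hconv]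
  exact hratio (hgrid hn) hstep hx hxstep

/-- Cramér-type moderate deviations for the rescaled magnetization
`W_n = (S_n − n m*)/σ_n` of the cubic Curie–Weiss model (unique nondegenerate
phase): there are `c, C > 0` such that for all `n ≥ 1` and `0 ≤ x ≤ c n^{1/6}`,
`|P_{n,K,J}(W_n > x)/P(Z > x) − 1| ≤ C (1+x³)/√n`. -/
theorem stmt_17 (K J : ℝ) (hK : 0 < K) (mstar : ℝ)
    (hmem : mstar ∈ Set.Ioo (-1 : ℝ) 1)
    (hmin : ∀ y ∈ Set.Icc (-1 : ℝ) 1, phiKJ K J mstar ≤ phiKJ K J y)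
    (huniq : ∀ y ∈ Set.Icc (-1 : ℝ) 1, phiKJ K J y = phiKJ K J mstar → y = mstar)
    (hconv : 0 < iteratedDeriv 2 (phiKJ K J) mstar) :
    ∃ c C : ℝ, 0 < c ∧ 0 < C ∧ ∀ n : ℕ, 1 ≤ n → ∀ x : ℝ,
      0 ≤ x → x ≤ c * (n : ℝ) ^ ((1 : ℝ)/6) →
      |cubicProb n K J
            {y | x < (totalMag n y - n * mstar) /
              Real.sqrt (n / iteratedDeriv 2 (phiKJ K J) mstar)} /
          (ProbabilityTheory.gaussianReal 0 1 (Set.Ioi x)).toReal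
        - 1| ≤ C * (1 + x ^ 3) / Real.sqrt n := by
  have hφ : phiKJ K J = freeEnergy fun m => K / 3 * m ^ 3 + J / 2 * m ^ 2 :=
    funext fun m => sub_sub _ _ _
  have hlaw : ∀ n s, cubicProb n K J s =
      (meanFieldMeasure n fun m => K / 3 * m ^ 3 + J / 2 * m ^ 2).real s := fun _ _ => rfl
  rw [hφ] at hmin huniq hconv ⊢
  simp only [hlaw]
  exact stmt_17_general _ mstar (by fun_prop) (by fun_prop) hmem
    (fun y hy hne => (hmin y hy).lt_of_ne fun h => hne (huniq y hy h.symm)) hconv
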